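/- If J ≤ Γ_g is a finitely generated subgroup, then the core surface Core(J) is compact. -/

import Mathlib

/-!
Formalization preamble for "Core Surfaces" (Magee–Puder).

We work with a fixed combinatorial (CW) model.  The surface `Σ_g` has one vertex,
`2g` directed labeled edges (the label `2i` plays the role of `a_{i+1}` and `2i+1`
the role of `b_{i+1}`), and one `4g`-gon glued along `[a₁,b₁]⋯[a_g,b_g]`.

* `Gamma g` is the surface group, presented by the single relator.
* A `Complex g` is a combinatorial 2-complex with directed, labeled edges and
  2-cells given by their boundary walks; coverings of `Σ_g` are the complexes in
  which every vertex has exactly one incoming/outgoing edge of each label, every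
  walk reading the relator is closed, and every closed walk reading the relator
  bounds exactly one face (`IsCovering`).  A tiled surface is a complex that
  embeds into such a covering (`IsTiledSurface`).
* Blocks, chains, boundary cycles (via the ribbon structure coming from the fixed
  cyclic order of the `4g` half-edges around a vertex of `Σ_g`), boundary-reduced
  and strongly boundary-reduced surfaces are defined combinatorially.
* Homotopy of edge-walks is the edge-path-group homotopy: backtrack insertions and
  insertions of boundaries of (present) faces.
* `cover g J` is the covering space `J\~Σ_g` of `Σ_g` associated to a subgroup
  `J ≤ Γ_g` (vertices = right cosets), and `coreSub g J` is the core surface of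
  `J`, defined exactly as in the paper: the union of all shortest representative
  cycles of essential free-homotopy classes, together with all components of the
  complement containing finitely many `4g`-gons.
-/

noncomputable section

namespace CS

/-- Signed letters over the generators `a₁,b₁,…,a_g,b_g` of `Γ_g`
(`a_{i+1} ↦ 2i`, `b_{i+1} ↦ 2i+1`); `true` means a positive letter. -/
abbrev Letter (g : ℕ) := Fin (2 * g) × Bool

/-- The label of the `p`-th letter of the relator `[a₁,b₁][a₂,b₂]⋯[a_g,b_g]`. -/
def relLabel (g : ℕ) (p : Fin (4 * g)) : Fin (2 * g) :=
  ⟨2 * ((p : ℕ) / 4) + ((p : ℕ) % 4) % 2, by have := p.2; omega⟩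

/-- The sign of the `p`-th letter of the relator. -/
def relSign (g : ℕ) (p : Fin (4 * g)) : Bool := decide ((p : ℕ) % 4 < 2)

/-- The relator `[a₁,b₁][a₂,b₂]⋯[a_g,b_g]` as a word (list of signed letters). -/
def relatorWord (g : ℕ) : List (Letter g) :=
  (List.finRange (4 * g)).map fun p => (relLabel g p, relSign g p)

/-- The relator as an element of the free group on the `2g` generators. -/
def relatorF (g : ℕ) : FreeGroup (Fin (2 * g)) :=
  ((relatorWord g).map fun l => if l.2 then FreeGroup.of l.1 else (FreeGroup.of l.1)⁻¹).prod

/-- The surface group `Γ_g = ⟨a₁,b₁,…,a_g,b_g ∣ [a₁,b₁]⋯[a_g,b_g]⟩`. -/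
abbrev Gamma (g : ℕ) := PresentedGroup ({relatorF g} : Set (FreeGroup (Fin (2 * g))))

/-- The image of a signed letter in `Γ_g`. -/
def letterG {g : ℕ} (l : Letter g) : Gamma g :=
  if l.2 then PresentedGroup.of l.1 else (PresentedGroup.of l.1)⁻¹

/-- The image of a word in `Γ_g`. -/
def wordG {g : ℕ} (w : List (Letter g)) : Gamma g := (w.map letterG).prod

/-- `ℓ(γ^{Γ_g})`: the minimal length of a word in the generators representing the
conjugacy class of `γ` in `Γ_g`. -/
def conjLen {g : ℕ} (γ : Gamma g) : ℕ :=
  sInf {n | ∃ w : List (Letter g), w.length = n ∧ ∃ x : Gamma g, x * wordG w * x⁻¹ = γ}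

/-! ### Half-edge positions around a vertex of `Σ_g`

The `4g` half-edges around the vertex `o` of `Σ_g` come in the (clockwise) cyclic
order `a₁`-out, `b₁`-in, `a₁`-in, `b₁`-out, `a₂`-out, `b₂`-in, `a₂`-in, `b₂`-out, …
-/

/-- Position of the outgoing `ℓ`-labeled half-edge in the cyclic order. -/
def posOut {g : ℕ} (ℓ : Fin (2 * g)) : ℕ :=
  if (ℓ : ℕ) % 2 = 0 then 2 * (ℓ : ℕ) else 2 * (ℓ : ℕ) + 1

/-- Position of the incoming `ℓ`-labeled half-edge in the cyclic order. -/
def posIn {g : ℕ} (ℓ : Fin (2 * g)) : ℕ :=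
  if (ℓ : ℕ) % 2 = 0 then 2 * (ℓ : ℕ) + 2 else 2 * (ℓ : ℕ) - 1

/-- The position of the half-edge through which a traversal of a dart with signed
letter `s` *arrives* at its terminal vertex. -/
def posArr {g : ℕ} (s : Letter g) : ℕ := if s.2 then posIn s.1 else posOut s.1

/-- The position of the half-edge through which a traversal of a dart with signed
letter `s` *leaves* its initial vertex. -/
def posLv {g : ℕ} (s : Letter g) : ℕ := if s.2 then posOut s.1 else posIn s.1

/-- The number of half-edges strictly between the arrival half-edge of `s` and the
departure half-edge of `t`, in the clockwise cyclic order of the `4g` half-edges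
around a vertex. -/
def gapN {g : ℕ} (s t : Letter g) : ℕ := (posLv t + 4 * g - (posArr s + 1)) % (4 * g)

/-! ### Combinatorial complexes -/

/-- A combinatorial at-most-2-dimensional CW-complex with directed edges labeled by
the generators of `Γ_g`, and 2-cells recorded by their boundary walks (lists of
darts, i.e. edges with a direction of traversal). -/
structure Complex (g : ℕ) where
  V : Type
  E : Type
  F : Type
  src : E → V
  dst : E → V
  lab : E → Fin (2 * g)
  bdry : F → List (E × Bool)

namespace Complex

variable {g : ℕ} (Y : Complex g)

/-- Darts: edges together with a direction of traversal (`true` = forward). -/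
abbrev D := Y.E × Bool

/-- The initial vertex of a dart. -/
def dTail (d : Y.D) : Y.V := if d.2 then Y.src d.1 else Y.dst d.1

/-- The terminal vertex of a dart. -/
def dHead (d : Y.D) : Y.V := if d.2 then Y.dst d.1 else Y.src d.1

/-- The reversal of a dart. -/
def dRev (d : Y.D) : Y.D := (d.1, !d.2)

/-- The signed letter read by a dart. -/
def dLet (d : Y.D) : Letter g := (Y.lab d.1, d.2)

/-- The word read along a list of darts. -/
def wordOf (l : List Y.D) : List (Letter g) := l.map Y.dLet

/-- The reversed walk. -/
def revW (l : List Y.D) : List Y.D := (l.map Y.dRev).reverse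

/-- `WalkFrom u v l` : `l` is a walk (edge-path) from `u` to `v`. -/
inductive WalkFrom : Y.V → Y.V → List Y.D → Prop
  | nil (v : Y.V) : WalkFrom v v []
  | cons (d : Y.D) {v : Y.V} {l : List Y.D} :
      WalkFrom (Y.dHead d) v l → WalkFrom (Y.dTail d) v (d :: l)

/-- All darts of `l` use edges from the set `sE`. -/
def InSet (sE : Set Y.E) (l : List Y.D) : Prop := ∀ d ∈ l, d.1 ∈ sE

/-- Two darts are adjacent (can be traversed consecutively). -/
def adj (d d' : Y.D) : Prop := Y.dHead d = Y.dTail d'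

/-- A nonempty closed walk. -/
def IsCycle (c : List Y.D) : Prop := c ≠ [] ∧ ∃ v, Y.WalkFrom v v c

/-- **P1**: at most one incoming and at most one outgoing `ℓ`-labeled edge at every
vertex, for every label `ℓ`. -/
def P1 : Prop :=
  (∀ e e' : Y.E, Y.src e = Y.src e' → Y.lab e = Y.lab e' → e = e') ∧
  (∀ e e' : Y.E, Y.dst e = Y.dst e' → Y.lab e = Y.lab e' → e = e')

/-- **P2**: every walk reading a word equal to `1` in `Γ_g` is closed. -/
def P2 : Prop :=
  ∀ (u v : Y.V) (l : List Y.D), Y.WalkFrom u v l → wordG (Y.wordOf l) = 1 → u = v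

/-- **P3**: every 2-cell is glued along a closed walk reading the relator
`[a₁,b₁]⋯[a_g,b_g]`, and every such closed walk bounds at most one 2-cell. -/
def P3 : Prop :=
  (∀ f : Y.F, (∃ v, Y.WalkFrom v v (Y.bdry f)) ∧ Y.wordOf (Y.bdry f) = relatorWord g) ∧
  Function.Injective Y.bdry

/-- A combinatorial covering space of `Σ_g`: every vertex has exactly one outgoing
and one incoming edge of each label, every walk reading the relator is closed, and
every closed walk reading the relator bounds exactly one `4g`-gon. -/
def IsCovering : Prop :=
  Y.P1 ∧ Y.P3 ∧
  (∀ (v : Y.V) (ℓ : Fin (2 * g)), ∃ e, Y.src e = v ∧ Y.lab e = ℓ) ∧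
  (∀ (v : Y.V) (ℓ : Fin (2 * g)), ∃ e, Y.dst e = v ∧ Y.lab e = ℓ) ∧
  (∀ (u v : Y.V) (l : List Y.D), Y.WalkFrom u v l → Y.wordOf l = relatorWord g → u = v) ∧
  (∀ (v : Y.V) (l : List Y.D), Y.WalkFrom v v l → Y.wordOf l = relatorWord g →
    ∃ f, Y.bdry f = l)

end Complex

/-- A morphism of labeled complexes: maps cells to cells of the same dimension and
respects sources, targets, labels and face boundaries (equivalently, commutes with
the immersions to `Σ_g`). -/
structure Hom {g : ℕ} (Y Z : Complex g) where
  mV : Y.V → Z.V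
  mE : Y.E → Z.E
  mF : Y.F → Z.F
  hsrc : ∀ e, Z.src (mE e) = mV (Y.src e)
  hdst : ∀ e, Z.dst (mE e) = mV (Y.dst e)
  hlab : ∀ e, Z.lab (mE e) = Y.lab e
  hbdry : ∀ f, Z.bdry (mF f) = (Y.bdry f).map fun d => (mE d.1, d.2)

namespace Hom

variable {g : ℕ} {Y Z : Complex g}

/-- The induced map on darts. -/
def mD (φ : Hom Y Z) (d : Y.D) : Z.D := (φ.mE d.1, d.2)

/-- Injectivity (an embedding of complexes). -/
def Inj (φ : Hom Y Z) : Prop :=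
  Function.Injective φ.mV ∧ Function.Injective φ.mE ∧ Function.Injective φ.mF

end Hom

namespace Complex

variable {g : ℕ} (Y : Complex g)

/-- A tiled surface: a complex which embeds into a combinatorial covering space of
`Σ_g` (compatibly with directions and labels). -/
def IsTiledSurface : Prop :=
  ∃ Z : Complex g, Z.IsCovering ∧ ∃ φ : Hom Y Z, φ.Inj

/-- Connectivity of a complex (any two vertices are joined by a walk). -/
def Connected : Prop := Nonempty Y.V ∧ ∀ v w : Y.V, ∃ l, Y.WalkFrom v w l

/-! ### Blocks and chains -/

/-- A block: a nonempty walk such that successive darts have no half-edges between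
them (hence it reads a subword of the cyclic relator, of length at most `4g`). -/
def IsBlock (l : List Y.D) : Prop :=
  l ≠ [] ∧ l.length ≤ 4 * g ∧
  List.Chain' (fun d d' => Y.adj d d' ∧ gapN (Y.dLet d) (Y.dLet d') = 0) l

/-- Two blocks are consecutive: concatenation is a walk and there is exactly one
half-edge between the last dart of the first and the first dart of the second. -/
def chainStep (b b' : List Y.D) : Prop :=
  ∃ d d', b.getLast? = some d ∧ b'.head? = some d' ∧ Y.adj d d' ∧
    gapN (Y.dLet d) (Y.dLet d') = 1

/-- A chain: a nonempty sequence of consecutive blocks. -/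
def IsChain (bs : List (List Y.D)) : Prop :=
  bs ≠ [] ∧ (∀ b ∈ bs, Y.IsBlock b) ∧ List.Chain' Y.chainStep bs

/-- A cyclic chain: a chain whose blocks pave an entire cycle. -/
def IsCyclicChain (bs : List (List Y.D)) : Prop :=
  Y.IsChain bs ∧ ∃ b b', bs.getLast? = some b ∧ bs.head? = some b' ∧ Y.chainStep b b'

/-- A long chain: a chain of consecutive blocks of lengths `2g, 2g−1, …, 2g−1, 2g`. -/
def IsLongChain (bs : List (List Y.D)) : Prop :=
  Y.IsChain bs ∧ ∃ k, bs.map List.length = 2 * g :: (List.replicate k (2 * g - 1) ++ [2 * g])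

/-- A half-chain: a cyclic chain all of whose blocks have length `2g − 1`. -/
def IsHalfChain (bs : List (List Y.D)) : Prop :=
  Y.IsCyclicChain bs ∧ ∀ b ∈ bs, b.length = 2 * g - 1

/-! ### Boundary cycles of the thick version (relative to sets of present edges and
faces), via the ribbon structure -/

/-- `nextD sE d d'`: among darts (with edge in `sE`) leaving the head of `d`, the
dart `d'` is the first one in clockwise order after the arrival half-edge of `d`.
This is the successor map whose orbits trace the boundary components of the thick
version of the ribbon graph. -/
def nextD (sE : Set Y.E) (d d' : Y.D) : Prop :=
  d'.1 ∈ sE ∧ Y.adj d d' ∧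
  ∀ d'' : Y.D, d''.1 ∈ sE → Y.adj d d'' →
    gapN (Y.dLet d) (Y.dLet d') ≤ gapN (Y.dLet d) (Y.dLet d'')

/-- The corner between the consecutive darts `d, d'` is filled by a face from `sF`. -/
def faceStep (sF : Set Y.F) (d d' : Y.D) : Prop :=
  ∃ f ∈ sF, [d, d'] <:+: (Y.bdry f ++ Y.bdry f)

/-- One step along the boundary of the thick version. -/
def bStep (sE : Set Y.E) (sF : Set Y.F) (d d' : Y.D) : Prop :=
  d.1 ∈ sE ∧ Y.nextD sE d d' ∧ ¬ Y.faceStep sF d d'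

/-- A (finite segment of a) boundary cycle of the thick version. -/
def BPath (sE : Set Y.E) (sF : Set Y.F) (l : List Y.D) : Prop :=
  l ≠ [] ∧ Y.InSet sE l ∧ List.Chain' (Y.bStep sE sF) l

/-- A (finite) boundary cycle of the thick version. -/
def BCycle (sE : Set Y.E) (sF : Set Y.F) (l : List Y.D) : Prop :=
  Y.BPath sE sF l ∧ ∃ d d', l.getLast? = some d ∧ l.head? = some d' ∧ Y.bStep sE sF d d'

/-- A dart lying on the boundary of the thick version. -/
def IsBDart (sE : Set Y.E) (sF : Set Y.F) (d : Y.D) : Prop :=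
  d.1 ∈ sE ∧ ∃ d', Y.nextD sE d d' ∧ ¬ Y.faceStep sF d d'

/-- Boundary reduced: no boundary cycle contains a long block (length `≥ 2g+1`) or
a long chain. -/
def BoundaryReduced (sE : Set Y.E) (sF : Set Y.F) : Prop :=
  (∀ l, Y.BPath sE sF l → ¬ (Y.IsBlock l ∧ 2 * g + 1 ≤ l.length)) ∧
  (∀ bs, Y.IsLongChain bs → ¬ Y.BPath sE sF bs.flatten)

/-- Strongly boundary reduced: no boundary cycle contains a half-block (length
exactly `2g`) or a half-chain. -/
def StronglyBoundaryReduced (sE : Set Y.E) (sF : Set Y.F) : Prop :=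
  (∀ l, Y.BPath sE sF l → ¬ (Y.IsBlock l ∧ l.length = 2 * g)) ∧
  (∀ bs, Y.IsHalfChain bs → ¬ Y.BCycle sE sF bs.flatten)

/-! ### Combinatorial homotopy of walks -/

/-- A closed walk traversing the boundary of a face from `sF` (in either direction,
starting anywhere). -/
def faceLoop (sF : Set Y.F) (b : List Y.D) : Prop :=
  ∃ f ∈ sF, ∃ n, b = (Y.bdry f).rotate n ∨ b = Y.revW ((Y.bdry f).rotate n)

/-- Elementary homotopy move: insertion of a backtrack or of a face boundary. -/
def elemMove (sE : Set Y.E) (sF : Set Y.F) (l l' : List Y.D) : Prop :=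
  (∃ (l₁ l₂ : List Y.D) (d : Y.D), d.1 ∈ sE ∧ l = l₁ ++ l₂ ∧ l' = l₁ ++ d :: Y.dRev d :: l₂) ∨
  (∃ l₁ l₂ b, Y.faceLoop sF b ∧ l = l₁ ++ l₂ ∧ l' = l₁ ++ b ++ l₂)

/-- Homotopy (rel endpoints) of walks from `u` to `v`, inside the subcomplex with
edge set `sE` and face set `sF`. -/
def Homotopic (sE : Set Y.E) (sF : Set Y.F) (u v : Y.V) (c c' : List Y.D) : Prop :=
  Relation.EqvGen
    (fun a b =>
      Y.WalkFrom u v a ∧ Y.WalkFrom u v b ∧ Y.InSet sE a ∧ Y.InSet sE b ∧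
        (Y.elemMove sE sF a b ∨ Y.elemMove sE sF b a)) c c'

/-- A closed walk which is null-homotopic. -/
def NullHomotopic (sE : Set Y.E) (sF : Set Y.F) (c : List Y.D) : Prop :=
  ∃ v, Y.WalkFrom v v c ∧ Y.Homotopic sE sF v v c []

/-- An essential cycle: a nonempty closed walk which is not null-homotopic. -/
def Essential (sE : Set Y.E) (sF : Set Y.F) (c : List Y.D) : Prop :=
  Y.IsCycle c ∧ Y.InSet sE c ∧ ¬ Y.NullHomotopic sE sF c

/-- Free homotopy of closed walks. -/
def FreelyHomotopic (sE : Set Y.E) (sF : Set Y.F) (c c' : List Y.D) : Prop :=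
  ∃ u v q, Y.WalkFrom u u c ∧ Y.WalkFrom v v c' ∧ Y.WalkFrom u v q ∧
    Y.InSet sE q ∧ Y.InSet sE c ∧ Y.InSet sE c' ∧
    Y.Homotopic sE sF u u c (q ++ c' ++ Y.revW q)

/-- `c` is a shortest representative of its free homotopy class. -/
def ShortestRep (sE : Set Y.E) (sF : Set Y.F) (c : List Y.D) : Prop :=
  ∀ c', Y.FreelyHomotopic sE sF c c' → c.length ≤ c'.length

end Complex

/-- `s` occurs as a contiguous subword of the cyclic word `c`. -/
def cycContains {α : Type*} (c s : List α) : Prop :=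
  s ≠ [] ∧ s.length ≤ c.length ∧ s <:+: (c ++ c)

namespace Complex

variable {g : ℕ} (Y : Complex g)

/-- The cycle `c` contains no long block and no long chain. -/
def NoLongBlockOrChainCyc (c : List Y.D) : Prop :=
  (∀ s, cycContains c s → ¬ (Y.IsBlock s ∧ 2 * g + 1 ≤ s.length)) ∧
  (∀ bs, Y.IsLongChain bs → ¬ cycContains c bs.flatten)

/-- A (cyclically) non-backtracking cycle. -/
def NonBacktrackingCyc (c : List Y.D) : Prop :=
  ¬ ∃ d : Y.D, cycContains c [d, Y.dRev d]

/-- A cycle which is essential and a shortest representative of its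
free homotopy class. -/
def GoodCycle (c : List Y.D) : Prop :=
  Y.IsCycle c ∧ Y.Essential Set.univ Set.univ c ∧ Y.ShortestRep Set.univ Set.univ c

/-! ### Cells and components of complements -/

/-- The cells of a complex. -/
def Cell := Y.V ⊕ Y.E ⊕ Y.F

def vCell (v : Y.V) : Y.Cell := Sum.inl v
def eCell (e : Y.E) : Y.Cell := Sum.inr (Sum.inl e)
def fCell (f : Y.F) : Y.Cell := Sum.inr (Sum.inr f)

/-- Basic incidence of (open) cells. -/
def inc0 : Y.Cell → Y.Cell → Prop := fun c c' =>
  match c, c' with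
  | Sum.inl v, Sum.inr (Sum.inl e) => Y.src e = v ∨ Y.dst e = v
  | Sum.inl v, Sum.inr (Sum.inr f) => ∃ d ∈ Y.bdry f, Y.dTail d = v
  | Sum.inr (Sum.inl e), Sum.inr (Sum.inr f) => ∃ b, (e, b) ∈ Y.bdry f
  | _, _ => False

/-- Symmetrized incidence of cells. -/
def incid (c c' : Y.Cell) : Prop := Y.inc0 c c' ∨ Y.inc0 c' c

end Complex

/-- A triple of subsets of the cells of a complex `Y` (a prospective subcomplex). -/
structure SubC {g : ℕ} (Y : Complex g) where
  sV : Set Y.V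
  sE : Set Y.E
  sF : Set Y.F

namespace SubC

variable {g : ℕ} {Y : Complex g}

/-- `S` is an actual subcomplex: closed under taking boundaries of cells. -/
def IsSub (S : SubC Y) : Prop :=
  (∀ e ∈ S.sE, Y.src e ∈ S.sV ∧ Y.dst e ∈ S.sV) ∧
  (∀ f ∈ S.sF, ∀ d ∈ Y.bdry f, d.1 ∈ S.sE)

/-- Containment of subcomplexes. -/
def le (S T : SubC Y) : Prop := S.sV ⊆ T.sV ∧ S.sE ⊆ T.sE ∧ S.sF ⊆ T.sF

/-- Compactness: finitely many cells. -/
def Compact (S : SubC Y) : Prop := S.sV.Finite ∧ S.sE.Finite ∧ S.sF.Finite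

/-- Connectivity of the subcomplex. -/
def Connected (S : SubC Y) : Prop :=
  S.sV.Nonempty ∧ ∀ v ∈ S.sV, ∀ w ∈ S.sV, ∃ l, Y.WalkFrom v w l ∧ Y.InSet S.sE l

/-- Image of a subcomplex under a morphism. -/
def image {Z : Complex g} (φ : Hom Y Z) (S : SubC Y) : SubC Z :=
  ⟨φ.mV '' S.sV, φ.mE '' S.sE, φ.mF '' S.sF⟩

end SubC

/-- The whole complex, as a subcomplex of itself. -/
def fullSub {g : ℕ} (Y : Complex g) : SubC Y := ⟨Set.univ, Set.univ, Set.univ⟩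

namespace Complex

variable {g : ℕ} (Y : Complex g)

/-- Membership of a cell in a subcomplex. -/
def inSub (S : SubC Y) : Y.Cell → Prop := fun c =>
  match c with
  | Sum.inl v => v ∈ S.sV
  | Sum.inr (Sum.inl e) => e ∈ S.sE
  | Sum.inr (Sum.inr f) => f ∈ S.sF

/-- Reachability of cells through the open complement of the subcomplex `S`
(= lying in the same connected component of the complement). -/
def reachS (S : SubC Y) (c c' : Y.Cell) : Prop :=
  Relation.ReflTransGen (fun a b => Y.incid a b ∧ ¬ Y.inSub S a ∧ ¬ Y.inSub S b) c c'

end Complex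

/-- The closure (as a subcomplex) of the connected component of the cell `c₀` in the
complement of the subcomplex `S`. -/
def compCl {g : ℕ} (Y : Complex g) (S : SubC Y) (c₀ : Y.Cell) : SubC Y :=
  let cF : Set Y.F := {f | Y.reachS S c₀ (Y.fCell f)}
  let cE : Set Y.E :=
    {e | Y.reachS S c₀ (Y.eCell e)} ∪ {e | ∃ f ∈ cF, ∃ b, (e, b) ∈ Y.bdry f}
  let cV : Set Y.V :=
    {v | Y.reachS S c₀ (Y.vCell v)} ∪ {v | ∃ e ∈ cE, Y.src e = v ∨ Y.dst e = v}
  ⟨cV, cE, cF⟩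

/-- The subcomplex has exactly one boundary cycle (which covers all boundary darts). -/
def OneBdry {g : ℕ} (Y : Complex g) (S : SubC Y) : Prop :=
  ∃ δ, Y.BCycle S.sE S.sF δ ∧ ∀ d, Y.IsBDart S.sE S.sF d → d ∈ δ

/-- The subcomplex has exactly two (disjoint) boundary cycles, covering all
boundary darts. -/
def TwoBdry {g : ℕ} (Y : Complex g) (S : SubC Y) : Prop :=
  ∃ δ₁ δ₂, Y.BCycle S.sE S.sF δ₁ ∧ Y.BCycle S.sE S.sF δ₂ ∧ δ₁.Disjoint δ₂ ∧
    ∀ d, Y.IsBDart S.sE S.sF d → d ∈ δ₁ ∨ d ∈ δ₂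

/-- The boundary-reduced closure of `S` inside `Y`: the intersection of all
intermediate boundary reduced subcomplexes. -/
def BRcl {g : ℕ} (Y : Complex g) (S : SubC Y) : SubC Y where
  sV := ⋂ T ∈ {T : SubC Y | T.IsSub ∧ S.le T ∧ Y.BoundaryReduced T.sE T.sF}, T.sV
  sE := ⋂ T ∈ {T : SubC Y | T.IsSub ∧ S.le T ∧ Y.BoundaryReduced T.sE T.sF}, T.sE
  sF := ⋂ T ∈ {T : SubC Y | T.IsSub ∧ S.le T ∧ Y.BoundaryReduced T.sE T.sF}, T.sF

/-- The strongly-boundary-reduced closure of `S` inside `Y`. -/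
def SBRcl {g : ℕ} (Y : Complex g) (S : SubC Y) : SubC Y where
  sV := ⋂ T ∈ {T : SubC Y | T.IsSub ∧ S.le T ∧ Y.StronglyBoundaryReduced T.sE T.sF}, T.sV
  sE := ⋂ T ∈ {T : SubC Y | T.IsSub ∧ S.le T ∧ Y.StronglyBoundaryReduced T.sE T.sF}, T.sE
  sF := ⋂ T ∈ {T : SubC Y | T.IsSub ∧ S.le T ∧ Y.StronglyBoundaryReduced T.sE T.sF}, T.sF

/-- An isomorphism between the subcomplex `S` of `Y` and the subcomplex `T` of `Z`. -/
structure SubEquiv {g : ℕ} (Y : Complex g) (S : SubC Y) (Z : Complex g) (T : SubC Z) where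
  fV : Y.V → Z.V
  fE : Y.E → Z.E
  fF : Y.F → Z.F
  bijV : Set.BijOn fV S.sV T.sV
  bijE : Set.BijOn fE S.sE T.sE
  bijF : Set.BijOn fF S.sF T.sF
  hsrc : ∀ e ∈ S.sE, Z.src (fE e) = fV (Y.src e)
  hdst : ∀ e ∈ S.sE, Z.dst (fE e) = fV (Y.dst e)
  hlab : ∀ e ∈ S.sE, Z.lab (fE e) = Y.lab e
  hbdry : ∀ f ∈ S.sF, Z.bdry (fF f) = (Y.bdry f).map fun d => (fE d.1, d.2)

/-- `FunnelComponent Y S c₀`: the connected component of the cell `c₀` in the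
complement of the subcomplex `S` is a twice-punctured sphere with one funnel and
one fake-puncture.  Rendered combinatorially: the component contains infinitely
many `4g`-gons (the funnel); there is a boundary cycle `δ` of `S` adjacent to the
component, it is unique (one fake-puncture), and every closed walk inside the
closure of the component is freely homotopic there to a power of `δ` or of its
inverse (so the closure is a half-open annulus bounded by `δ`). -/
def FunnelComponent {g : ℕ} (Y : Complex g) (S : SubC Y) (c₀ : Y.Cell) : Prop :=
  {f : Y.F | Y.reachS S c₀ (Y.fCell f)}.Infinite ∧
  ∃ δ : List Y.D, Y.BCycle S.sE S.sF δ ∧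
    (∃ d ∈ δ, ∃ c', Y.incid (Y.eCell d.1) c' ∧ Y.reachS S c₀ c') ∧
    (∀ δ', Y.BCycle S.sE S.sF δ' →
      (∃ d ∈ δ', ∃ c', Y.incid (Y.eCell d.1) c' ∧ Y.reachS S c₀ c') →
      ∃ n, δ' = δ.rotate n) ∧
    (∀ (v : Y.V) (l : List Y.D), Y.WalkFrom v v l →
      Y.InSet ({e | Y.reachS S c₀ (Y.eCell e)} ∪ {e | ∃ b, (e, b) ∈ δ}) l →
      ∃ n,
        Y.FreelyHomotopic ({e | Y.reachS S c₀ (Y.eCell e)} ∪ {e | ∃ b, (e, b) ∈ δ})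
          {f | Y.reachS S c₀ (Y.fCell f)} l ((List.replicate n δ).flatten) ∨
        Y.FreelyHomotopic ({e | Y.reachS S c₀ (Y.eCell e)} ∪ {e | ∃ b, (e, b) ∈ δ})
          {f | Y.reachS S c₀ (Y.fCell f)} l ((List.replicate n (Y.revW δ)).flatten))

/-- `Y` contains a funnel: an essential cycle `δ` of `Y` cutting off an infinite
region of `Y` which is attached to the rest of `Y` only along `δ`, contains no
boundary of `Y`, and is a half-open annulus (every loop inside is freely homotopic
to a power of `δ`); i.e. an end of `Y` which is a puncture of the ambient covering. -/
def HasFunnel {g : ℕ} (Y : Complex g) : Prop :=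
  ∃ (δ : List Y.D) (sE : Set Y.E) (sF : Set Y.F),
    Y.IsCycle δ ∧ Y.Essential Set.univ Set.univ δ ∧
    (∀ d ∈ δ, d.1 ∉ sE) ∧ sE.Nonempty ∧ sF.Infinite ∧
    (∀ f ∈ sF, ∀ d ∈ Y.bdry f, d.1 ∈ sE ∨ ∃ b, (d.1, b) ∈ δ) ∧
    (∀ f : Y.F, (∃ d ∈ Y.bdry f, d.1 ∈ sE) → f ∈ sF) ∧
    (∀ d : Y.D, d.1 ∈ sE → ¬ Y.IsBDart Set.univ Set.univ d) ∧
    (∀ v : Y.V, (∃ e ∈ sE, Y.src e = v ∨ Y.dst e = v) → (∀ d ∈ δ, Y.dTail d ≠ v) →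
      ∀ e' : Y.E, (Y.src e' = v ∨ Y.dst e' = v) → e' ∈ sE) ∧
    (∀ (v : Y.V) (l : List Y.D), Y.WalkFrom v v l →
      Y.InSet (sE ∪ {e | ∃ b, (e, b) ∈ δ}) l →
      ∃ n,
        Y.FreelyHomotopic (sE ∪ {e | ∃ b, (e, b) ∈ δ}) sF l
          ((List.replicate n δ).flatten) ∨
        Y.FreelyHomotopic (sE ∪ {e | ∃ b, (e, b) ∈ δ}) sF l
          ((List.replicate n (Y.revW δ)).flatten))

/-- The fundamental group of `Y` is cyclic: some closed walk `c` generates all free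
homotopy classes of loops.  (For a connected surface this is *equivalent to NOT
having genus ≥ 1 or at least 3 boundary components/punctures*.) -/
def CyclicPi1 {g : ℕ} (Y : Complex g) : Prop :=
  ∃ c : List Y.D, ∀ (v : Y.V) (l : List Y.D), Y.WalkFrom v v l →
    ∃ n,
      Y.FreelyHomotopic Set.univ Set.univ l ((List.replicate n c).flatten) ∨
      Y.FreelyHomotopic Set.univ Set.univ l ((List.replicate n (Y.revW c)).flatten)

/-! ### The covering space `J\~Σ_g` and the core surface of `J` -/

/-- Right cosets `Jx` of `J` in `Γ_g` — the vertices (and faces) of `J\~Σ_g`. -/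
abbrev Cos (g : ℕ) (J : Subgroup (Gamma g)) := Quotient (QuotientGroup.rightRel J)

/-- The coset `Jx`. -/
def mkCos (g : ℕ) (J : Subgroup (Gamma g)) (x : Gamma g) : Cos g J :=
  Quotient.mk _ x

/-- Right multiplication on right cosets. -/
def rmul (g : ℕ) (J : Subgroup (Gamma g)) (x : Gamma g) : Cos g J → Cos g J :=
  Quotient.map (· * x) (by
    intro a b hab
    have h1 : b * a⁻¹ ∈ J := QuotientGroup.rightRel_apply.mp hab
    refine QuotientGroup.rightRel_apply.mpr ?_
    have h2 : b * x * (a * x)⁻¹ = b * a⁻¹ := by group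
    rw [h2]; exact h1)

/-- The walk in `J\~Σ_g` starting at a vertex and reading a given word. -/
def relWalk (g : ℕ) (J : Subgroup (Gamma g)) :
    Cos g J → List (Letter g) → List ((Cos g J × Fin (2 * g)) × Bool)
  | _, [] => []
  | v, (ℓ, true) :: w =>
      ((v, ℓ), true) :: relWalk g J (rmul g J (PresentedGroup.of ℓ) v) w
  | v, (ℓ, false) :: w =>
      ((rmul g J (PresentedGroup.of ℓ)⁻¹ v, ℓ), false) ::
        relWalk g J (rmul g J (PresentedGroup.of ℓ)⁻¹ v) w

/-- The covering space `Υ = J\~Σ_g` of `Σ_g` corresponding to the subgroup `J`,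
with the CW-structure pulled back from `Σ_g`: vertices and `4g`-gons are the right
cosets of `J`, and each vertex carries one outgoing edge per label. -/
def cover (g : ℕ) (J : Subgroup (Gamma g)) : Complex g where
  V := Cos g J
  E := Cos g J × Fin (2 * g)
  F := Cos g J
  src e := e.1
  dst e := rmul g J (PresentedGroup.of e.2) e.1
  lab e := e.2
  bdry v := relWalk g J v (relatorWord g)

/-- The map `J₁\~Σ_g → J₂\~Σ_g` on vertices, for `J₁ ≤ J₂`. -/
def coverMapV {g : ℕ} {J₁ J₂ : Subgroup (Gamma g)} (h : J₁ ≤ J₂) :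
    Cos g J₁ → Cos g J₂ :=
  Quotient.map id (by
    intro a b hab
    have h1 : b * a⁻¹ ∈ J₁ := QuotientGroup.rightRel_apply.mp hab
    exact QuotientGroup.rightRel_apply.mpr (h h1))

/-- The natural covering morphism on edges. -/
def coverMapE {g : ℕ} {J₁ J₂ : Subgroup (Gamma g)} (h : J₁ ≤ J₂)
    (e : (cover g J₁).E) : (cover g J₂).E :=
  (coverMapV h e.1, e.2)

/-- The natural covering morphism on darts. -/
def coverMapD {g : ℕ} {J₁ J₂ : Subgroup (Gamma g)} (h : J₁ ≤ J₂)
    (d : (cover g J₁).D) : (cover g J₂).D :=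
  (coverMapE h d.1, d.2)

/-- The cycle `c` in `J\~Σ_g` represents the conjugacy class of `γ` in `J`
(conjugacy classes in `J` ↔ free homotopy classes of essential loops in `J\~Σ_g`). -/
def RepCls {g : ℕ} (J : Subgroup (Gamma g)) (c : List ((cover g J).D))
    (γ : Gamma g) : Prop :=
  ∃ x j : Gamma g, j ∈ J ∧
    (cover g J).WalkFrom (mkCos g J x) (mkCos g J x) c ∧
    x * wordG ((cover g J).wordOf c) * x⁻¹ = j * γ * j⁻¹

/-- Step (i) of the definition of the core surface: the edges lying on some
shortest representative cycle of an essential free homotopy class. -/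
def coreE1 (g : ℕ) (J : Subgroup (Gamma g)) : Set (cover g J).E :=
  {e | ∃ c, (cover g J).GoodCycle c ∧ ∃ b, (e, b) ∈ c}

/-- The vertices of step (i) of the definition of the core surface. -/
def coreV1 (g : ℕ) (J : Subgroup (Gamma g)) : Set (cover g J).V :=
  {v | ∃ e ∈ coreE1 g J, (cover g J).src e = v ∨ (cover g J).dst e = v}

/-- Step (i) of the definition of the core surface, as a subcomplex of `J\~Σ_g`. -/
def coreS1 (g : ℕ) (J : Subgroup (Gamma g)) : SubC (cover g J) :=
  ⟨coreV1 g J, coreE1 g J, ∅⟩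

/-- A cell of `J\~Σ_g` lying in a connected component of the complement of step (i)
which contains only finitely many `4g`-gons. -/
def coreFin (g : ℕ) (J : Subgroup (Gamma g)) (c : (cover g J).Cell) : Prop :=
  ¬ (cover g J).inSub (coreS1 g J) c ∧
  {f : (cover g J).F | (cover g J).reachS (coreS1 g J) c ((cover g J).fCell f)}.Finite

open Classical in
/-- The core surface `Core(J)` of a subgroup `J ≤ Γ_g`, as a subcomplex of
`Υ = J\~Σ_g`: (i) the union of all shortest representative cycles of essential
free homotopy classes in `Υ`, together with (ii) all connected components of the
complement containing finitely many `4g`-gons.  For the trivial subgroup it is a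
single vertex. -/
def coreSub (g : ℕ) (J : Subgroup (Gamma g)) : SubC (cover g J) :=
  if J = ⊥ then ⟨{mkCos g J 1}, ∅, ∅⟩
  else
    ⟨coreV1 g J ∪ {v | coreFin g J ((cover g J).vCell v)},
     coreE1 g J ∪ {e | coreFin g J ((cover g J).eCell e)},
     {f | coreFin g J ((cover g J).fCell f)}⟩

section PP1

variable {g : ℕ}

/-- inverse letter -/
def lInv (l : Letter g) : Letter g := (l.1, !l.2)

/-- inverse word -/
def wInv (w : List (Letter g)) : List (Letter g) := (w.map lInv).reverse

theorem letterG_inv (l : Letter g) : letterG (lInv l) = (letterG l)⁻¹ := by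
  rcases l with ⟨l, b⟩
  cases b <;> simp [letterG, lInv]

@[simp] theorem wordG_nil : wordG ([] : List (Letter g)) = 1 := rfl

@[simp] theorem wordG_cons (l : Letter g) (w : List (Letter g)) :
    wordG (l :: w) = letterG l * wordG w := by simp [wordG]

@[simp] theorem wordG_append (w w' : List (Letter g)) :
    wordG (w ++ w') = wordG w * wordG w' := by simp [wordG]

@[simp] theorem wordG_wInv (w : List (Letter g)) : wordG (wInv w) = (wordG w)⁻¹ := by
  induction w with
  | nil => simp [wInv]
  | cons l w ih =>
    have : wInv (l :: w) = wInv w ++ [lInv l] := by simp [wInv]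
    rw [this]; simp [ih, letterG_inv]

theorem mk_relatorF : (PresentedGroup.mk ({relatorF g} : Set (FreeGroup (Fin (2 * g))))) (relatorF g) = 1 := by
  apply PresentedGroup.one_of_mem; simp

theorem wordG_relator : wordG (relatorWord g) = 1 := by
  refine Eq.trans ?_ (mk_relatorF (g := g))
  have h : ∀ F : FreeGroup (Fin (2 * g)), F = relatorF g →
      wordG (relatorWord g) = (PresentedGroup.mk ({relatorF g} : Set (FreeGroup (Fin (2 * g))))) F := by
    intro F hF
    rw [hF]
    conv_rhs => arg 2; unfold relatorF
    rw [wordG, map_list_prod, List.map_map]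
    congr 1
    apply List.map_congr_left
    intro l _
    rcases l with ⟨l, b⟩
    cases b <;> simp [letterG, PresentedGroup.of]
  exact h _ rfl

theorem exists_word (x : Gamma g) : ∃ w : List (Letter g), wordG w = x := by
  have hx : x ∈ Subgroup.closure (Set.range (PresentedGroup.of (rels := ({relatorF g} : Set (FreeGroup (Fin (2 * g))))))) := by
    rw [PresentedGroup.closure_range_of]; trivial
  induction hx using Subgroup.closure_induction with
  | mem y hy => obtain ⟨l, rfl⟩ := hy; exact ⟨[(l, true)], by simp [letterG]⟩
  | one => exact ⟨[], rfl⟩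
  | mul a b _ _ ha hb =>
    obtain ⟨u, rfl⟩ := ha; obtain ⟨v, rfl⟩ := hb; exact ⟨u ++ v, by simp⟩
  | inv a _ ha => obtain ⟨u, rfl⟩ := ha; exact ⟨wInv u, by simp⟩

theorem word_rel (r : List (Letter g) → List (Letter g) → Prop) (hr : Equivalence r)
    (hmul : ∀ {a b c d}, r a b → r c d → r (a ++ c) (b ++ d))
    (hc : ∀ l, r [l, lInv l] []) (hrel : r (relatorWord g) [])
    {w w' : List (Letter g)} (h : wordG w = wordG w') : r w w' := by
  let C : Con (FreeMonoid (Letter g)) :=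
    { r := fun a b => r a.toList b.toList
      iseqv := ⟨fun _ => hr.refl _, fun h => hr.symm h, fun h h' => hr.trans h h'⟩
      mul' := fun h h' => hmul h h' }
  have key : ∀ a b : List (Letter g), ((FreeMonoid.ofList a : C.Quotient) = (FreeMonoid.ofList b : C.Quotient)) ↔ r a b := by
    intro a b; exact C.eq
  let f : Fin (2 * g) → C.Quotientˣ := fun l =>
    { val := ((FreeMonoid.ofList [(l, true)] : FreeMonoid (Letter g)) : C.Quotient)
      inv := ((FreeMonoid.ofList [(l, false)] : FreeMonoid (Letter g)) : C.Quotient)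
      val_inv := by
        have := (key [(l, true), (l, false)] []).2 (hc (l, true)); exact this
      inv_val := by
        have := (key [(l, false), (l, true)] []).2 (hc (l, false)); exact this }
  have hw : ∀ w : List (Letter g), (((w.map fun l => if l.2 then f l.1 else (f l.1)⁻¹).prod : C.Quotientˣ) : C.Quotient) = ((FreeMonoid.ofList w : FreeMonoid (Letter g)) : C.Quotient) := by
    intro w
    induction w with
    | nil => rfl
    | cons l w ih =>
      rw [List.map_cons, List.prod_cons, Units.val_mul, ih]
      rcases l with ⟨l, b⟩
      cases b <;> rfl
  have hf : ∀ x ∈ ({relatorF g} : Set (FreeGroup (Fin (2 * g)))), FreeGroup.lift f x = 1 := by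
    intro x hx
    rw [Set.mem_singleton_iff] at hx
    subst hx
    have e : FreeGroup.lift f (relatorF g) = ((relatorWord g).map fun l => if l.2 then f l.1 else (f l.1)⁻¹).prod := by
      rw [relatorF, map_list_prod, List.map_map]
      congr 1
      apply List.map_congr_left
      intro l _
      rcases l with ⟨l, b⟩
      cases b <;> simp
    rw [e]
    apply Units.ext
    rw [hw]
    exact (key _ _).2 hrel
  have hG : ∀ w : List (Letter g), PresentedGroup.toGroup hf (wordG w) = (w.map fun l => if l.2 then f l.1 else (f l.1)⁻¹).prod := by
    intro w
    rw [wordG, map_list_prod, List.map_map]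
    congr 1
    apply List.map_congr_left
    intro l _
    rcases l with ⟨l, b⟩
    cases b <;> simp [letterG, PresentedGroup.toGroup.of]
  rw [← key, ← hw, ← hw, ← hG, ← hG, h]

/-! cosets -/

variable {J : Subgroup (Gamma g)}

@[simp] theorem rmul_mk (x y : Gamma g) : rmul g J x (mkCos g J y) = mkCos g J (y * x) := rfl

theorem cos_ind (v : Cos g J) : ∃ x, v = mkCos g J x := by
  induction v using Quotient.inductionOn with
  | h x => exact ⟨x, rfl⟩

theorem mkCos_eq {x y : Gamma g} : mkCos g J x = mkCos g J y ↔ y * x⁻¹ ∈ J := by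
  unfold mkCos
  rw [Quotient.eq]
  exact QuotientGroup.rightRel_apply

@[simp] theorem rmul_rmul (x y : Gamma g) (v : Cos g J) : rmul g J y (rmul g J x v) = rmul g J (x * y) v := by
  obtain ⟨z, rfl⟩ := cos_ind v; simp [mul_assoc]

@[simp] theorem rmul_one (v : Cos g J) : rmul g J 1 v = v := by
  obtain ⟨z, rfl⟩ := cos_ind v; simp

/-- right multiplication as an equivalence -/
def rE (J : Subgroup (Gamma g)) (x : Gamma g) : Cos g J ≃ Cos g J where
  toFun := rmul g J x
  invFun := rmul g J x⁻¹
  left_inv v := by simp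
  right_inv v := by simp

/-! walks -/

theorem relWalk_cons (v : Cos g J) (l : Letter g) (w : List (Letter g)) :
    relWalk g J v (l :: w) = relWalk g J v [l] ++ relWalk g J (rmul g J (letterG l) v) w := by
  rcases l with ⟨l, b⟩
  cases b <;> simp [relWalk, letterG]

theorem relWalk_append (v : Cos g J) (w w' : List (Letter g)) :
    relWalk g J v (w ++ w') = relWalk g J v w ++ relWalk g J (rmul g J (wordG w) v) w' := by
  induction w generalizing v with
  | nil => simp [relWalk]
  | cons l w ih =>
    rw [List.cons_append, relWalk_cons, ih, relWalk_cons v l w]; simp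

theorem relWalk_length (v : Cos g J) (w : List (Letter g)) : (relWalk g J v w).length = w.length := by
  induction w generalizing v with
  | nil => simp [relWalk]
  | cons l w ih =>
    rw [relWalk_cons, List.length_append, ih]
    rcases l with ⟨l, b⟩
    cases b <;> simp [relWalk] <;> omega

theorem walk_append {Y : Complex g} {u v t : Y.V} {l l' : List Y.D} (h : Y.WalkFrom u v l) (h' : Y.WalkFrom v t l') :
    Y.WalkFrom u t (l ++ l') := by
  induction h with
  | nil => exact h'
  | cons d _ ih => exact Complex.WalkFrom.cons d (ih h')

theorem walk_relWalk (v : Cos g J) (w : List (Letter g)) :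
    (cover g J).WalkFrom v (rmul g J (wordG w) v) (relWalk g J v w) := by
  induction w generalizing v with
  | nil =>
    rw [wordG_nil, rmul_one]; exact Complex.WalkFrom.nil (Y := cover g J) v
  | cons l w ih =>
    rcases l with ⟨l, b⟩
    cases b
    · have h := Complex.WalkFrom.cons (Y := cover g J) (((rmul g J (PresentedGroup.of l)⁻¹ v, l), false)) (ih (rmul g J (PresentedGroup.of l)⁻¹ v))
      have e1 : (cover g J).dTail ((rmul g J (PresentedGroup.of l)⁻¹ v, l), false) = v := by
        show rmul g J (PresentedGroup.of l) (rmul g J (PresentedGroup.of l)⁻¹ v) = v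
        simp
      have e2 : rmul g J (wordG w) (rmul g J (PresentedGroup.of l)⁻¹ v) = rmul g J (wordG ((l, false) :: w)) v := by
        simp [letterG]
      rw [e1, e2] at h
      exact h
    · have h := Complex.WalkFrom.cons (Y := cover g J) (((v, l), true)) (ih (rmul g J (PresentedGroup.of l) v))
      have e2 : rmul g J (wordG w) (rmul g J (PresentedGroup.of l) v) = rmul g J (wordG ((l, true) :: w)) v := by
        simp [letterG]
      rw [e2] at h
      exact h

theorem wordOf_relWalk (v : Cos g J) (w : List (Letter g)) :
    (cover g J).wordOf (relWalk g J v w) = w := by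
  induction w generalizing v with
  | nil => rfl
  | cons l w ih =>
    rcases l with ⟨l, b⟩
    cases b
    · exact congrArg (List.cons _) (ih _)
    · exact congrArg (List.cons _) (ih _)

theorem walk_eq (u v : (cover g J).V) {l : List (cover g J).D} (h : (cover g J).WalkFrom u v l) :
    l = relWalk g J u ((cover g J).wordOf l) ∧ v = rmul g J (wordG ((cover g J).wordOf l)) u := by
  induction h with
  | nil => exact ⟨rfl, (rmul_one _).symm⟩
  | @cons d v l' h ih =>
    rcases d with ⟨⟨x, l⟩, b⟩
    obtain ⟨h1, h2⟩ := ih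
    cases b
    · have e1 : rmul g J (PresentedGroup.of l)⁻¹ ((cover g J).dTail ((x, l), false)) = x := by
        show rmul g J (PresentedGroup.of l)⁻¹ (rmul g J (PresentedGroup.of l) x) = x
        simp
      constructor
      · show _ = ((rmul g J (PresentedGroup.of l)⁻¹ ((cover g J).dTail ((x, l), false)), l), false) ::
          relWalk g J (rmul g J (PresentedGroup.of l)⁻¹ ((cover g J).dTail ((x, l), false))) ((cover g J).wordOf l')
        rw [e1]
        exact congrArg (List.cons _) h1
      · refine h2.trans ?_
        show rmul g J (wordG ((cover g J).wordOf l')) x = rmul g J (wordG ((l, false) :: (cover g J).wordOf l')) (rmul g J (PresentedGroup.of l) x)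
        rw [wordG_cons, rmul_rmul]
        congr 1
        simp [letterG]
    · constructor
      · exact congrArg (List.cons _) h1
      · refine h2.trans ?_
        show rmul g J (wordG ((cover g J).wordOf l')) (rmul g J (PresentedGroup.of l) x) = rmul g J (wordG ((l, true) :: (cover g J).wordOf l')) x
        rw [wordG_cons, ← rmul_rmul]
        rfl

end PP1

section PP2

variable {g : ℕ} {J : Subgroup (Gamma g)}

/-- edges of the cover -/
abbrev Ed (g : ℕ) (J : Subgroup (Gamma g)) := Cos g J × Fin (2 * g)

/-- end of an edge -/
def edst (e : Ed g J) : Cos g J := rmul g J (PresentedGroup.of e.2) e.1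

/-- chain of a dart -/
def dch (d : Ed g J × Bool) : Ed g J →₀ ℤ :=
  if d.2 then Finsupp.single d.1 1 else - Finsupp.single d.1 1

/-- chain of a list of darts -/
def chL (L : List (Ed g J × Bool)) : Ed g J →₀ ℤ := (L.map dch).sum

/-- chain of the walk reading a word -/
def ch (v : Cos g J) (w : List (Letter g)) : Ed g J →₀ ℤ := chL (relWalk g J v w)

@[simp] theorem chL_nil : chL ([] : List (Ed g J × Bool)) = 0 := rfl
@[simp] theorem chL_cons (d : Ed g J × Bool) (L) : chL (d :: L) = dch d + chL L := by simp [chL]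
@[simp] theorem chL_append (L L' : List (Ed g J × Bool)) : chL (L ++ L') = chL L + chL L' := by simp [chL]

@[simp] theorem ch_nil (v : Cos g J) : ch v [] = 0 := rfl
theorem ch_append (v : Cos g J) (w w') : ch v (w ++ w') = ch v w + ch (rmul g J (wordG w) v) w' := by
  simp [ch, relWalk_append]
theorem ch_cons (v : Cos g J) (l w) : ch v (l :: w) = ch v [l] + ch (rmul g J (letterG l) v) w := by
  have := ch_append v [l] w
  simpa using this
theorem ch_pos (v : Cos g J) (l) : ch v [(l, true)] = Finsupp.single (v, l) 1 := by
  simp [ch, relWalk, dch]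
theorem ch_neg (v : Cos g J) (l) : ch v [(l, false)] = - Finsupp.single (rmul g J (PresentedGroup.of l)⁻¹ v, l) 1 := by
  simp [ch, relWalk, dch]

/-- boundary of edges -/
def d1 (g : ℕ) (J : Subgroup (Gamma g)) : (Ed g J →₀ ℤ) →ₗ[ℤ] (Cos g J →₀ ℤ) :=
  Finsupp.linearCombination ℤ (fun e => Finsupp.single (edst e) 1 - Finsupp.single e.1 1)

/-- boundary of faces -/
def d2 (g : ℕ) (J : Subgroup (Gamma g)) : (Cos g J →₀ ℤ) →ₗ[ℤ] (Ed g J →₀ ℤ) :=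
  Finsupp.linearCombination ℤ (fun v => ch v (relatorWord g))

theorem d1_single (e : Ed g J) (n : ℤ) : d1 g J (Finsupp.single e n) = n • (Finsupp.single (edst e) 1 - Finsupp.single e.1 1) := by
  simp [d1]

theorem d2_single (v : Cos g J) (n : ℤ) : d2 g J (Finsupp.single v n) = n • ch v (relatorWord g) := by
  simp [d2]

theorem d1_ch (v : Cos g J) (w) : d1 g J (ch v w) = Finsupp.single (rmul g J (wordG w) v) 1 - Finsupp.single v 1 := by
  induction w generalizing v with
  | nil => simp
  | cons l w ih =>
    rw [ch_cons, map_add, ih]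
    rcases l with ⟨l, b⟩
    cases b
    · rw [ch_neg, map_neg, d1_single]
      simp [edst, letterG]
    · rw [ch_pos, d1_single]
      simp [edst, letterG]

theorem d1_d2 (A : Cos g J →₀ ℤ) : d1 g J (d2 g J A) = 0 := by
  induction A using Finsupp.induction_linear with
  | zero => simp
  | add a b ha hb => rw [map_add, map_add, ha, hb, add_zero]
  | single v n => rw [d2_single, map_smul, d1_ch, wordG_relator]; simp

/-! relator structure -/

/-- the generator `a_k` -/
def gA (g k : ℕ) : Gamma g := if h : 2 * k < 2 * g then PresentedGroup.of ⟨2 * k, h⟩ else 1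
/-- the generator `b_k` -/
def gB (g k : ℕ) : Gamma g := if h : 2 * k + 1 < 2 * g then PresentedGroup.of ⟨2 * k + 1, h⟩ else 1

/-- partial products -/
def pP (g : ℕ) : ℕ → Gamma g
  | 0 => 1
  | k + 1 => pP g k * gA g k * gB g k * (gA g k)⁻¹ * (gB g k)⁻¹

/-- a commutator block -/
def blk (g k : ℕ) : List (Letter g) :=
  if h : k < g then [(⟨2 * k, by omega⟩, true), (⟨2 * k + 1, by omega⟩, true),
    (⟨2 * k, by omega⟩, false), (⟨2 * k + 1, by omega⟩, false)] else []

theorem relator_blk : relatorWord g = (List.range g).flatMap (blk g) := by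
  have h1 : relatorWord g = List.ofFn (fun p => (relLabel g p, relSign g p)) := by
    rw [relatorWord, List.ofFn_eq_map]
  rw [h1, List.ofFn_mul']
  rw [List.flatMap, ← List.map_coe_finRange_eq_range, List.map_map, List.ofFn_eq_map]
  congr 1
  apply List.map_congr_left
  intro k _
  have hk := k.2
  simp only [Function.comp, blk, hk, dif_pos]
  simp only [List.ofFn_succ, List.ofFn_zero, relLabel, relSign]
  simp
  omega

theorem wordG_blk {k : ℕ} (h : k < g) : wordG (blk g k) = gA g k * gB g k * (gA g k)⁻¹ * (gB g k)⁻¹ := by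
  have h1 : 2 * k < 2 * g := by omega
  have h2 : 2 * k + 1 < 2 * g := by omega
  simp [blk, h, gA, gB, h2, letterG, mul_assoc]

theorem wordG_blks {n : ℕ} (h : n ≤ g) : wordG ((List.range n).flatMap (blk g)) = pP g n := by
  induction n with
  | zero => rfl
  | succ n ih =>
    rw [List.range_succ, List.flatMap_append, wordG_append, ih (by omega)]
    simp [wordG_blk (show n < g by omega), pP, mul_assoc]

theorem pP_g : pP g g = 1 := by
  rw [← wordG_blks le_rfl, ← relator_blk, wordG_relator]

/-- left multiplier -/
def Lm {g : ℕ} (l : Fin (2 * g)) : Gamma g :=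
  if (l : ℕ) % 2 = 0 then pP g (l / 2) else pP g (l / 2) * gA g (l / 2)
/-- right multiplier -/
def Rm {g : ℕ} (l : Fin (2 * g)) : Gamma g :=
  if (l : ℕ) % 2 = 0 then pP g (l / 2) * gA g (l / 2) * gB g (l / 2) * (gA g (l / 2))⁻¹ else pP g (l / 2 + 1)

/-- contribution of a label -/
def cc (v : Cos g J) (i : ℕ) : Ed g J →₀ ℤ := if h : i < 2 * g then
  Finsupp.single (rmul g J (Lm ⟨i, h⟩) v, ⟨i, h⟩) 1 - Finsupp.single (rmul g J (Rm ⟨i, h⟩) v, ⟨i, h⟩) 1 else 0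

theorem ch_blk (v : Cos g J) {k : ℕ} (h : k < g) :
    ch (rmul g J (pP g k) v) (blk g k) = cc v (2 * k) + cc v (2 * k + 1) := by
  have h1 : 2 * k < 2 * g := by omega
  have h2 : 2 * k + 1 < 2 * g := by omega
  have e1 : (2 * k + 1) / 2 = k := by omega
  have e2 : (2 * k) / 2 = k := by omega
  have a1 : (PresentedGroup.of (⟨2 * k, h1⟩ : Fin (2 * g)) : Gamma g) = gA g k := by simp [gA, h]
  have a2 : (PresentedGroup.of (⟨2 * k + 1, h2⟩ : Fin (2 * g)) : Gamma g) = gB g k := by simp [gB, h2]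
  rw [blk, dif_pos h, ch_cons, ch_cons _ _ (_ :: _ :: []), ch_cons _ _ (_ :: []), ch_pos, ch_pos, ch_neg, ch_neg]
  rw [cc, cc, dif_pos h1, dif_pos h2, Lm, Lm, Rm, Rm]
  have o1 : (2 * k) % 2 = 0 := by omega
  have o2 : (2 * k + 1) % 2 = 1 := by omega
  simp only [rmul_rmul, letterG, a1, a2, e1, e2, o1, o2, pP]
  simp only [if_true, one_ne_zero, if_false, Bool.false_eq_true]
  abel

theorem ch_rel_sum (v : Cos g J) {n : ℕ} (h : n ≤ g) :
    ch v ((List.range n).flatMap (blk g)) = ∑ i ∈ Finset.range (2 * n), cc v i := by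
  induction n with
  | zero => simp
  | succ n ih =>
    rw [List.range_succ, List.flatMap_append, ch_append, ih (by omega), wordG_blks (by omega)]
    simp only [List.flatMap_cons, List.flatMap_nil, List.append_nil]
    rw [ch_blk v (by omega), show 2 * (n + 1) = 2 * n + 1 + 1 by ring, Finset.sum_range_succ, Finset.sum_range_succ]
    abel

/-- the face on the left of an edge -/
def fL (e : Ed g J) : Cos g J := rmul g J (Lm e.2)⁻¹ e.1
/-- the face on the right of an edge -/
def fR (e : Ed g J) : Cos g J := rmul g J (Rm e.2)⁻¹ e.1

theorem rmul_eq_iff {x : Gamma g} {u v : Cos g J} : rmul g J x v = u ↔ v = rmul g J x⁻¹ u := by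
  constructor
  · rintro rfl; simp
  · rintro rfl; simp

theorem ch_relator_apply (v : Cos g J) (e : Ed g J) : ch v (relatorWord g) e =
    Finsupp.single v (1 : ℤ) (fL e) - Finsupp.single v (1 : ℤ) (fR e) := by
  classical
  rw [relator_blk, ch_rel_sum v le_rfl, Finset.sum_range, Finsupp.finsetSum_apply]
  rw [Finset.sum_eq_single e.2]
  · rcases e with ⟨u, l⟩
    simp only [cc, l.2, dif_pos, fL, fR, Fin.eta]
    simp only [Finsupp.sub_apply, Finsupp.single_apply, Prod.mk.injEq, and_true, rmul_eq_iff]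
  · intro l _ hl
    rcases e with ⟨u, l'⟩
    simp only [cc, l.2, dif_pos, Fin.eta]
    simp only [Finsupp.sub_apply, Finsupp.single_apply, Prod.mk.injEq]
    simp only [ne_eq] at hl
    simp [hl]
  · simp

theorem d2_apply (A : Cos g J →₀ ℤ) (e : Ed g J) : d2 g J A e = A (fL e) - A (fR e) := by
  induction A using Finsupp.induction_linear with
  | zero => simp
  | add a b ha hb => rw [map_add, Finsupp.add_apply, ha, hb]; simp; ring
  | single v n =>
    classical
    rw [d2_single, Finsupp.smul_apply, ch_relator_apply]
    simp only [Finsupp.single_apply, smul_eq_mul]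
    split_ifs <;> simp

/-! rotation -/

theorem rot_aux (Q : Cos g J → Prop) (v : Cos g J)
    (h : ∀ e : Ed g J, (e.1 = v ∨ edst e = v) → (Q (fL e) ↔ Q (fR e))) (k : ℕ) (hk : k < g) :
    (Q (rmul g J (pP g k)⁻¹ v) ↔ Q (rmul g J (pP g k * gA g k * gB g k * (gA g k)⁻¹)⁻¹ v)) ∧
    (Q (rmul g J ((gB g k)⁻¹ * (pP g k * gA g k)⁻¹) v) ↔ Q (rmul g J (pP g k * gA g k * gB g k * (gA g k)⁻¹)⁻¹ v)) ∧
    (Q (rmul g J ((gA g k)⁻¹ * (pP g k)⁻¹) v) ↔ Q (rmul g J ((gB g k)⁻¹ * (pP g k * gA g k)⁻¹) v)) ∧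
    (Q (rmul g J (pP g k * gA g k)⁻¹ v) ↔ Q (rmul g J (pP g (k + 1))⁻¹ v)) := by
  have h1 : 2 * k < 2 * g := by omega
  have h2 : 2 * k + 1 < 2 * g := by omega
  have e1 : (2 * k + 1) / 2 = k := by omega
  have e2 : (2 * k) / 2 = k := by omega
  have a1 : (PresentedGroup.of (⟨2 * k, h1⟩ : Fin (2 * g)) : Gamma g) = gA g k := by simp [gA, h1]
  have a2 : (PresentedGroup.of (⟨2 * k + 1, h2⟩ : Fin (2 * g)) : Gamma g) = gB g k := by simp [gB, h2]
  have o1 : (2 * k) % 2 = 0 := by omega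
  have o2 : (2 * k + 1) % 2 = 1 := by omega
  have q1 := h (v, ⟨2 * k, h1⟩) (Or.inl rfl)
  have q2 := h (rmul g J (gB g k)⁻¹ v, ⟨2 * k + 1, h2⟩) (Or.inr (by simp [edst, a2]))
  have q3 := h (rmul g J (gA g k)⁻¹ v, ⟨2 * k, h1⟩) (Or.inr (by simp [edst, a1]))
  have q4 := h (v, ⟨2 * k + 1, h2⟩) (Or.inl rfl)
  simp only [fL, fR, Lm, Rm, o1, o2, e1, e2, if_true, one_ne_zero, if_false, rmul_rmul] at q1 q2 q3 q4
  refine ⟨q1, ?_, ?_, q4⟩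
  · convert q2 using 3
    simp [pP, mul_assoc]
  · convert q3 using 3
    simp [mul_assoc]

theorem rot_all (Q : Cos g J → Prop) (v : Cos g J)
    (h : ∀ e : Ed g J, (e.1 = v ∨ edst e = v) → (Q (fL e) ↔ Q (fR e))) (k : ℕ) (hk : k ≤ g) :
    Q (rmul g J (pP g k)⁻¹ v) ↔ Q v := by
  induction k with
  | zero => simp [pP]
  | succ k ih =>
    obtain ⟨a, b, c, d⟩ := rot_aux Q v h k (by omega)
    rw [← d, ← ih (by omega), a, ← b, ← c, mul_inv_rev]

theorem rot_edge (Q : Cos g J → Prop) (v : Cos g J)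
    (h : ∀ e : Ed g J, (e.1 = v ∨ edst e = v) → (Q (fL e) ↔ Q (fR e))) (e : Ed g J) (he : e.1 = v ∨ edst e = v) :
    Q (fL e) ↔ Q v := by
  rcases e with ⟨u, ⟨l, hl⟩⟩
  obtain ⟨k, rfl | rfl⟩ : ∃ k, l = 2 * k ∨ l = 2 * k + 1 := ⟨l / 2, by omega⟩
  all_goals
    have hk : k < g := by omega
    obtain ⟨a, b, c, d⟩ := rot_aux Q v h k hk
    have r := rot_all Q v h k hk.le
    have e1 : (2 * k + 1) / 2 = k := by omega
    have e2 : (2 * k) / 2 = k := by omega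
    have o1 : (2 * k) % 2 = 0 := by omega
    have o2 : (2 * k + 1) % 2 = 1 := by omega
  · rcases he with he | he
    · simp only at he; subst he
      simpa only [fL, Lm, o1, e2, if_true] using r
    · have a1 : (PresentedGroup.of (⟨2 * k, hl⟩ : Fin (2 * g)) : Gamma g) = gA g k := by simp [gA, hl]
      simp only [edst, a1, rmul_eq_iff] at he; subst he
      simp only [fL, Lm, o1, e2, if_true, rmul_rmul]
      rw [c, b, ← a, r]
  · rcases he with he | he
    · simp only at he; subst he
      simp only [fL, Lm, o2, e1, if_false, one_ne_zero]
      rw [d]; exact rot_all Q u h (k + 1) (by omega)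
    · have a1 : (PresentedGroup.of (⟨2 * k + 1, hl⟩ : Fin (2 * g)) : Gamma g) = gB g k := by simp [gB, hl]
      simp only [edst, a1, rmul_eq_iff] at he; subst he
      simp only [fL, Lm, o2, e1, if_false, one_ne_zero, rmul_rmul]
      rw [b, ← a, r]

theorem dual_const {α : Type*} (A : Cos g J → α) (h : ∀ e, A (fL e) = A (fR e)) (u v : Cos g J) : A u = A v := by
  have key : ∀ v : Cos g J, ∀ e : Ed g J, (e.1 = v ∨ edst e = v) → A (fL e) = A v := by
    intro v e he
    exact (rot_edge (fun x => A x = A v) v (fun e _ => by rw [h e]) e he).2 rfl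
  have kP : ∀ k ≤ g, ∀ v : Cos g J, A (rmul g J (pP g k)⁻¹ v) = A v := by
    intro k hk v
    exact (rot_all (fun x => A x = A v) v (fun e _ => by rw [h e]) k hk).2 rfl
  have kE : ∀ (l : Fin (2 * g)) (v : Cos g J), A (rmul g J (PresentedGroup.of l) v) = A v := by
    intro l v
    exact (key (edst (v, l)) (v, l) (Or.inr rfl)).symm.trans (key v (v, l) (Or.inl rfl))
  have kL : ∀ (l : Letter g) (v : Cos g J), A (rmul g J (letterG l) v) = A v := by
    rintro ⟨l, b⟩ v
    cases b
    · rw [← kE l]; simp [letterG]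
    · exact kE l v
  have kW : ∀ (w : List (Letter g)) (v : Cos g J), A (rmul g J (wordG w) v) = A v := by
    intro w
    induction w with
    | nil => simp
    | cons l w ih => intro v; rw [wordG_cons, ← rmul_rmul, ih, kL]
  obtain ⟨x, rfl⟩ := cos_ind u
  obtain ⟨y, rfl⟩ := cos_ind v
  obtain ⟨w, hw⟩ := exists_word (x⁻¹ * y)
  rw [← kW w (mkCos g J x), hw, rmul_mk]; simp

theorem d2_inj [Infinite (Cos g J)] (A : Cos g J →₀ ℤ) (h : d2 g J A = 0) : A = 0 := by
  have h1 : ∀ e, A (fL e) = A (fR e) := by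
    intro e
    have := d2_apply A e
    rw [h] at this
    simp at this; omega
  obtain ⟨v, hv⟩ := Infinite.exists_notMem_finset A.support
  ext u
  rw [dual_const A h1 u v]
  simpa using hv

/-! homology and homotopy of equal words -/

/-- boundaries -/
def B1 (g : ℕ) (J : Subgroup (Gamma g)) : Submodule ℤ (Ed g J →₀ ℤ) := LinearMap.range (d2 g J)
/-- cycles -/
def Z1 (g : ℕ) (J : Subgroup (Gamma g)) : Submodule ℤ (Ed g J →₀ ℤ) := LinearMap.ker (d1 g J)

theorem B1_le_Z1 : B1 g J ≤ Z1 g J := by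
  rintro _ ⟨A, rfl⟩
  exact d1_d2 A

theorem ch_cancel (v : Cos g J) (l : Letter g) : ch v [l, lInv l] = 0 := by
  rw [ch_cons]
  rcases l with ⟨l, b⟩
  cases b
  · simp only [lInv, Bool.not_false]; rw [ch_neg, ch_pos]; simp [letterG]
  · simp only [lInv, Bool.not_true]; rw [ch_neg, ch_pos]; simp [letterG]

theorem ch_homol {w w' : List (Letter g)} (h : wordG w = wordG w') (v : Cos g J) : ch v w - ch v w' ∈ B1 g J := by
  have := word_rel (fun w w' => wordG w = wordG w' ∧ ∀ v : Cos g J, ch v w - ch v w' ∈ B1 g J)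
    ⟨fun w => ⟨rfl, fun v => by simp⟩, fun {a b} h => ⟨h.1.symm, fun v => by
        have := neg_mem (h.2 v); simpa using this⟩,
      fun {a b c} h h' => ⟨h.1.trans h'.1, fun v => by
        have := add_mem (h.2 v) (h'.2 v); simpa using this⟩⟩
    (by
      intro a b c d h h'
      refine ⟨by simp [h.1, h'.1], fun v => ?_⟩
      rw [ch_append, ch_append, h.1]
      have := add_mem (h.2 v) (h'.2 (rmul g J (wordG b) v))
      convert this using 1
      abel)
    (by
      intro l
      refine ⟨by simp [letterG_inv], fun v => ?_⟩
      rw [ch_cancel]; simp)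
    ⟨by rw [wordG_relator]; simp, fun v => by
      refine ⟨Finsupp.single v 1, ?_⟩
      rw [d2_single]; simp⟩ h
  exact this.2 v

theorem hom_congr {Y : Complex g} {u v s t : Y.V} {p q a b : List Y.D} (hp : Y.WalkFrom s u p) (hq : Y.WalkFrom v t q)
    (h : Y.Homotopic Set.univ Set.univ u v a b) :
    Y.Homotopic Set.univ Set.univ s t (p ++ a ++ q) (p ++ b ++ q) := by
  unfold Complex.Homotopic at h ⊢
  have mv : ∀ a b, Y.elemMove Set.univ Set.univ a b → Y.elemMove Set.univ Set.univ (p ++ a ++ q) (p ++ b ++ q) := by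
    rintro a b (⟨l₁, l₂, d, hd, rfl, rfl⟩ | ⟨l₁, l₂, d, hd, rfl, rfl⟩)
    · left; exact ⟨p ++ l₁, l₂ ++ q, d, hd, by simp, by simp⟩
    · right; exact ⟨p ++ l₁, l₂ ++ q, d, hd, by simp, by simp⟩
  induction h with
  | rel a b h =>
    obtain ⟨h1, h2, -, -, h5⟩ := h
    refine Relation.EqvGen.rel _ _ ⟨walk_append (walk_append hp h1) hq, walk_append (walk_append hp h2) hq,
      fun _ _ => trivial, fun _ _ => trivial, ?_⟩
    exact h5.imp (mv _ _) (mv _ _)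
  | refl a => exact Relation.EqvGen.refl _
  | symm a b _ ih => exact Relation.EqvGen.symm _ _ ih
  | trans a b c _ _ h1 h2 => exact Relation.EqvGen.trans _ _ _ h1 h2

theorem relWalk_hom {w w' : List (Letter g)} (h : wordG w = wordG w') (v : Cos g J) :
    (cover g J).Homotopic Set.univ Set.univ v (rmul g J (wordG w) v) (relWalk g J v w) (relWalk g J v w') := by
  have := word_rel (fun w w' => wordG w = wordG w' ∧ ∀ v : Cos g J,
    (cover g J).Homotopic Set.univ Set.univ v (rmul g J (wordG w) v) (relWalk g J v w) (relWalk g J v w'))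
    ⟨fun w => ⟨rfl, fun v => Relation.EqvGen.refl _⟩, fun {a b} h => ⟨h.1.symm, fun v => by
        have := h.2 v
        rw [h.1] at this
        exact Relation.EqvGen.symm _ _ this⟩,
      fun {a b c} h h' => ⟨h.1.trans h'.1, fun v => by
        have h2 := h'.2 v
        rw [← h.1] at h2
        exact Relation.EqvGen.trans _ _ _ (h.2 v) h2⟩⟩
    (by
      intro a b c d h h'
      refine ⟨by simp [h.1, h'.1], fun v => ?_⟩
      rw [relWalk_append, relWalk_append, h.1]
      have h1 := hom_congr (Complex.WalkFrom.nil (Y := cover g J) v) (walk_relWalk (rmul g J (wordG a) v) c) (h.2 v)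
      have h2 := hom_congr (walk_relWalk v b) (Complex.WalkFrom.nil (Y := cover g J) _) (h'.2 (rmul g J (wordG b) v))
      simp only [List.nil_append, List.append_nil] at h1 h2
      rw [h.1, rmul_rmul] at h1
      rw [rmul_rmul] at h2
      rw [wordG_append, h.1]
      exact Relation.EqvGen.trans _ _ _ h1 h2)
    (by
      intro l
      refine ⟨by simp [letterG_inv], fun v => ?_⟩
      have w1 := walk_relWalk v [l, lInv l]
      have e : wordG [l, lInv l] = 1 := by simp [letterG_inv]
      rw [e, rmul_one] at w1 ⊢
      refine Relation.EqvGen.rel _ _ ⟨w1, Complex.WalkFrom.nil (Y := cover g J) v, fun _ _ => trivial, fun _ _ => trivial, Or.inr (Or.inl ⟨[], [], ?_⟩)⟩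
      rcases l with ⟨l, b⟩
      cases b
      · refine ⟨((rmul g J (PresentedGroup.of l)⁻¹ v, l), false), trivial, rfl, rfl⟩
      · refine ⟨((v, l), true), trivial, rfl, ?_⟩
        show ((v, l), true) :: ((rmul g J (PresentedGroup.of l)⁻¹ (rmul g J (PresentedGroup.of l) v), l), false) :: [] = _
        rw [rmul_rmul, mul_inv_cancel, rmul_one]; rfl)
    ⟨by rw [wordG_relator]; simp, fun v => by
      have w1 := walk_relWalk v (relatorWord g)
      rw [wordG_relator, rmul_one] at w1 ⊢
      refine Relation.EqvGen.rel _ _ ⟨w1, Complex.WalkFrom.nil (Y := cover g J) v, fun _ _ => trivial, fun _ _ => trivial, Or.inr (Or.inr ⟨[], [], relWalk g J v (relatorWord g), ?_, rfl, ?_⟩)⟩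
      · exact ⟨v, trivial, 0, Or.inl (List.rotate_zero _).symm⟩
      · exact (List.append_nil _).symm⟩ h
  exact this.2 v

end PP2

section PP3

variable {g : ℕ} {J H : Subgroup (Gamma g)}

theorem chL_support (L : List (Ed g J × Bool)) (e : Ed g J) (he : chL L e ≠ 0) : ∃ b, (e, b) ∈ L := by
  induction L with
  | nil => simp at he
  | cons d L ih =>
    rcases d with ⟨e', b⟩
    by_cases h : e' = e
    · subst h; exact ⟨b, by simp⟩
    · have : chL L e ≠ 0 := by
        rw [chL_cons, Finsupp.add_apply] at he
        have : dch (e', b) e = 0 := by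
          cases b <;> simp [dch, h]
        rw [this, zero_add] at he; exact he
      obtain ⟨b', hb⟩ := ih this
      exact ⟨b', by simp [hb]⟩

/-- projection of covers on vertices -/
abbrev pV (h : H ≤ J) : Cos g H → Cos g J := coverMapV h
/-- projection of covers on edges -/
def pE (h : H ≤ J) (e : Ed g H) : Ed g J := (pV h e.1, e.2)

@[simp] theorem pV_mk (h : H ≤ J) (x : Gamma g) : pV h (mkCos g H x) = mkCos g J x := rfl
theorem pV_rmul (h : H ≤ J) (x : Gamma g) (v) : pV h (rmul g H x v) = rmul g J x (pV h v) := by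
  obtain ⟨y, rfl⟩ := cos_ind v; simp
theorem pV_surj (h : H ≤ J) : Function.Surjective (pV h) := by
  intro v; obtain ⟨y, rfl⟩ := cos_ind v; exact ⟨mkCos g H y, rfl⟩
theorem fL_pE (h : H ≤ J) (e : Ed g H) : fL (pE h e) = pV h (fL e) := by
  simp [fL, pE, pV_rmul]
theorem fR_pE (h : H ≤ J) (e : Ed g H) : fR (pE h e) = pV h (fR e) := by
  simp [fR, pE, pV_rmul]

theorem relWalk_proj (h : H ≤ J) (v : Cos g H) (w) :
    (relWalk g H v w).map (fun d => (pE h d.1, d.2)) = relWalk g J (pV h v) w := by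
  induction w generalizing v with
  | nil => rfl
  | cons l w ih =>
    rcases l with ⟨l, b⟩
    cases b
    · simp only [relWalk, List.map_cons, ih]
      simp only [pV_rmul, pE]
    · simp only [relWalk, List.map_cons, ih]
      simp only [pV_rmul, pE]

theorem ch_wInv_mem (v : Cos g J) (u) : ch v u + ch (rmul g J (wordG u) v) (wInv u) ∈ B1 g J := by
  have := ch_homol (J := J) (w := u ++ wInv u) (w' := []) (by simp) v
  simpa [ch_append] using this

theorem generation (S : Set (Gamma g)) (hS : Subgroup.closure S = J) (M : Submodule ℤ (Ed g H →₀ ℤ)) (hM : B1 g H ≤ M)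
    (hs : ∀ s ∈ S, ∀ y ∈ J, ∃ u, wordG u = s ∧ ch (mkCos g H y) u ∈ M) (u : List (Letter g)) (hu : wordG u ∈ J)
    (y : Gamma g) (hy : y ∈ J) : ch (mkCos g H y) u ∈ M := by
  have key : ∀ x ∈ J, ∀ y ∈ J, ∃ u, wordG u = x ∧ ch (mkCos g H y) u ∈ M := by
    intro x hx
    rw [← hS] at hx
    induction hx using Subgroup.closure_induction with
    | mem s h => exact hs s h
    | one => intro y _; exact ⟨[], rfl, by simp⟩
    | mul a b ha hb iha ihb =>
      intro y hy
      obtain ⟨u, hu, h1⟩ := iha y hy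
      rw [hS] at ha
      obtain ⟨u', hu', h2⟩ := ihb (y * a) (mul_mem hy ha)
      refine ⟨u ++ u', by simp [hu, hu'], ?_⟩
      rw [ch_append, hu, rmul_mk]
      exact add_mem h1 h2
    | inv a ha iha =>
      intro y hy
      rw [hS] at ha
      obtain ⟨u, hu, h1⟩ := iha (y * a⁻¹) (mul_mem hy (inv_mem ha))
      refine ⟨wInv u, by simp [hu], ?_⟩
      have := hM (ch_wInv_mem (mkCos g H (y * a⁻¹)) u)
      rw [hu, rmul_mk] at this
      simp only [inv_mul_cancel_right] at this
      exact (Submodule.add_mem_iff_right _ h1).1 this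
  obtain ⟨u', hu', h1⟩ := key _ hu y hy
  have := hM (ch_homol hu'.symm (mkCos g H y))
  have := add_mem this h1
  simpa using this

theorem Z1_le (M : Submodule ℤ (Ed g J →₀ ℤ)) (hM : B1 g J ≤ M)
    (h : ∀ u, wordG u ∈ J → ch (mkCos g J 1) u ∈ M) : Z1 g J ≤ M := by
  have hex : ∀ v : Cos g J, ∃ t : List (Letter g), mkCos g J (wordG t) = v := by
    intro v
    obtain ⟨x, rfl⟩ := cos_ind v
    obtain ⟨w, rfl⟩ := exists_word x
    exact ⟨w, rfl⟩
  choose t ht using hex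
  let T : (Cos g J →₀ ℤ) →ₗ[ℤ] (Ed g J →₀ ℤ) := Finsupp.linearCombination ℤ (fun v => ch (mkCos g J 1) (t v))
  have hT : ∀ v, T (Finsupp.single v 1) = ch (mkCos g J 1) (t v) := by intro v; simp [T]
  have h1 : ∀ e : Ed g J, Finsupp.single e 1 - T (d1 g J (Finsupp.single e 1)) ∈ M := by
    rintro ⟨v, l⟩
    have ee : rmul g J (PresentedGroup.of l) v = edst (v, l) := rfl
    have a := h (t v ++ [(l, true)] ++ wInv (t (edst (v, l)))) (by
      have : mkCos g J (wordG (t v) * PresentedGroup.of l) = mkCos g J (wordG (t (edst (v, l)))) := by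
        rw [ht, ← ee, ← rmul_mk, ht]
      have := inv_mem (mkCos_eq.1 this)
      simpa [letterG, mul_assoc] using this)
    have b := hM (ch_wInv_mem (mkCos g J 1) (t (edst (v, l))))
    rw [d1_single, one_smul, map_sub, hT, hT]
    rw [ch_append, ch_append, wordG_append, rmul_mk, rmul_mk, one_mul, ht, ch_pos] at a
    rw [rmul_mk, one_mul, ht] at b
    have e3 : mkCos g J (1 * (wordG (t v) * wordG [(l, true)])) = edst (v, l) := by
      rw [one_mul, ← rmul_mk, ht, ← ee]; simp [letterG]
    rw [e3] at a
    have := sub_mem a b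
    convert this using 1
    simp only
    abel
  have h2 : ∀ z, z - T (d1 g J z) ∈ M := by
    intro z
    induction z using Finsupp.induction_linear with
    | zero => simp
    | add a b ha hb =>
      have := add_mem ha hb
      convert this using 1
      rw [map_add, map_add]; abel
    | single e n =>
      have := M.smul_mem n (h1 e)
      rw [smul_sub, ← map_smul, ← map_smul, Finsupp.smul_single] at this
      simpa using this
  intro z hz
  have := h2 z
  have hz' : d1 g J z = 0 := hz
  rw [hz'] at this
  simpa using this

/-- chosen word of an element -/
def wd (x : Gamma g) : List (Letter g) := (exists_word x).choose
theorem wordG_wd (x : Gamma g) : wordG (wd x) = x := (exists_word x).choose_spec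

/-- edges of the generating loops -/
def E0 (J : Subgroup (Gamma g)) (S : Set (Gamma g)) : Set (Ed g J) :=
  {e | ∃ s ∈ S, ∃ b, (e, b) ∈ relWalk g J (mkCos g J 1) (wd s)}

theorem E0_finite (S : Set (Gamma g)) (hS : S.Finite) : (E0 J S).Finite := by
  have : E0 J S ⊆ ⋃ s ∈ S, {e | e ∈ (relWalk g J (mkCos g J 1) (wd s)).map Prod.fst} := by
    rintro e ⟨s, hs, b, hb⟩
    simp only [Set.mem_iUnion]
    exact ⟨s, hs, List.mem_map.2 ⟨_, hb, rfl⟩⟩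
  exact (hS.biUnion (fun s _ => List.finite_toSet _)).subset this

theorem mkCos_mem {y : Gamma g} (hy : y ∈ J) : mkCos g J y = mkCos g J 1 := by
  rw [mkCos_eq]; simpa using hy

theorem ch_supp_E0 (h : H ≤ J) (S : Set (Gamma g)) (hS : Subgroup.closure S = J) (u : List (Letter g)) (hu : wordG u ∈ J) :
    ch (mkCos g H 1) u ∈ B1 g H ⊔ Finsupp.supported ℤ ℤ (pE h ⁻¹' E0 J S) := by
  refine generation S hS _ le_sup_left ?_ u hu 1 (one_mem _)
  intro s hs y hy
  refine ⟨wd s, wordG_wd s, Submodule.mem_sup_right ?_⟩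
  rw [Finsupp.mem_supported]
  intro e he
  obtain ⟨b, hb⟩ := chL_support _ e (Finsupp.mem_support_iff.1 he)
  refine ⟨s, hs, b, ?_⟩
  rw [← mkCos_mem hy, ← pV_mk h, ← relWalk_proj]
  exact List.mem_map.2 ⟨_, hb, rfl⟩

theorem Z1_E0 (S : Set (Gamma g)) (hS : Subgroup.closure S = J) :
    Z1 g J ≤ B1 g J ⊔ Finsupp.supported ℤ ℤ (E0 J S) := by
  refine Z1_le _ le_sup_left ?_
  intro u hu
  have := ch_supp_E0 le_rfl S hS u hu
  convert this using 3
  ext e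
  rcases e with ⟨v, l⟩
  obtain ⟨x, rfl⟩ := cos_ind v
  rfl

end PP3

section PP4
open Classical

variable {g : ℕ} {J : Subgroup (Gamma g)}

/-- edges touching a finite set of faces -/
def touched (Y : Finset (Cos g J)) : Finset (Ed g J) :=
  (Y ×ˢ (Finset.univ : Finset (Fin (2 * g)))).image (fun p => (rmul g J (Lm p.2) p.1, p.2)) ∪
  (Y ×ˢ (Finset.univ : Finset (Fin (2 * g)))).image (fun p => (rmul g J (Rm p.2) p.1, p.2))

theorem mem_touched {Y : Finset (Cos g J)} {e : Ed g J} : e ∈ touched Y ↔ fL e ∈ Y ∨ fR e ∈ Y := by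
  rcases e with ⟨v, l⟩
  simp only [touched, Finset.mem_union, Finset.mem_image, Finset.mem_product, Finset.mem_univ, and_true, Prod.mk.injEq,
    Prod.exists, fL, fR]
  constructor
  · rintro (⟨a, b, h, rfl, rfl⟩ | ⟨a, b, h, rfl, rfl⟩)
    · left; simpa using h
    · right; simpa using h
  · rintro (h | h)
    · left; exact ⟨_, l, h, by simp⟩
    · right; exact ⟨_, l, h, by simp⟩

theorem card_L (Y : Finset (Cos g J)) (T : Finset (Ed g J)) (hT : ∀ e, fL e ∈ Y → e ∈ T) :
    (T.filter (fun e => fL e ∈ Y)).card = 2 * g * Y.card := by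
  have : (Y ×ˢ (Finset.univ : Finset (Fin (2 * g)))).card = 2 * g * Y.card := by
    rw [Finset.card_product]; simp [mul_comm]
  rw [← this]
  refine Finset.card_nbij' (fun e => (fL e, e.2)) (fun p => (rmul g J (Lm p.2) p.1, p.2)) ?_ ?_ ?_ ?_
  · intro e he; simp at he ⊢; exact he.2
  · intro p hp
    simp at hp ⊢
    have : fL (rmul g J (Lm p.2) p.1, p.2) ∈ Y := by simpa [fL] using hp
    exact ⟨hT _ this, this⟩
  · intro e _; simp [fL]
  · intro p _; simp [fL]

theorem card_R (Y : Finset (Cos g J)) (T : Finset (Ed g J)) (hT : ∀ e, fR e ∈ Y → e ∈ T) :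
    (T.filter (fun e => fR e ∈ Y)).card = 2 * g * Y.card := by
  have : (Y ×ˢ (Finset.univ : Finset (Fin (2 * g)))).card = 2 * g * Y.card := by
    rw [Finset.card_product]; simp [mul_comm]
  rw [← this]
  refine Finset.card_nbij' (fun e => (fR e, e.2)) (fun p => (rmul g J (Rm p.2) p.1, p.2)) ?_ ?_ ?_ ?_
  · intro e he; simp at he ⊢; exact he.2
  · intro p hp
    simp at hp ⊢
    have : fR (rmul g J (Rm p.2) p.1, p.2) ∈ Y := by simpa [fR] using hp
    exact ⟨hT _ this, this⟩
  · intro e _; simp [fR]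
  · intro p _; simp [fR]

/-- closed pairs of finite sets of edges and faces -/
def Cl (sE : Finset (Ed g J)) (sF : Finset (Cos g J)) : Prop :=
  (∀ e, fL e ∈ sF → e ∈ sE) ∧ (∀ e, fR e ∈ sF → e ∈ sE)

/-- uncovered left sides -/
def uL (sE : Finset (Ed g J)) (sF : Finset (Cos g J)) : Finset (Ed g J) := sE.filter (fun e => ¬ fL e ∈ sF)
/-- uncovered right sides -/
def uR (sE : Finset (Ed g J)) (sF : Finset (Cos g J)) : Finset (Ed g J) := sE.filter (fun e => ¬ fR e ∈ sF)
/-- number of uncovered sides -/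
def mm (sE : Finset (Ed g J)) (sF : Finset (Cos g J)) : ℕ := (uL sE sF).card + (uR sE sF).card

theorem card_sides {sE : Finset (Ed g J)} {sF : Finset (Cos g J)} (h : Cl sE sF) :
    2 * sE.card = 4 * g * sF.card + mm sE sF := by
  have h1 := card_L sF sE h.1
  have h2 := card_R sF sE h.2
  have h3 := Finset.card_filter_add_card_filter_not (s := sE) (fun e => fL e ∈ sF)
  have h4 := Finset.card_filter_add_card_filter_not (s := sE) (fun e => fR e ∈ sF)
  unfold mm uL uR
  have : 4 * g * sF.card = 2 * g * sF.card + 2 * g * sF.card := by ring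
  omega

theorem card_verts {sE : Finset (Ed g J)} {sF : Finset (Cos g J)} (h : Cl sE sF) :
    (sE.image Prod.fst ∪ sE.image edst).card ≤ sF.card + 2 * mm sE sF := by
  have hs : sE.image Prod.fst ∪ sE.image edst ⊆ sF ∪ ((uL sE sF ∪ uR sE sF).image Prod.fst ∪ (uL sE sF ∪ uR sE sF).image edst) := by
    intro v hv
    have hv' : ∃ e ∈ sE, e.1 = v ∨ edst e = v := by
      simp only [Finset.mem_union, Finset.mem_image] at hv
      rcases hv with ⟨e, he, h⟩ | ⟨e, he, h⟩
      · exact ⟨e, he, Or.inl h⟩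
      · exact ⟨e, he, Or.inr h⟩
    obtain ⟨e, he, hev⟩ := hv'
    by_cases hu : ∃ e ∈ uL sE sF ∪ uR sE sF, e.1 = v ∨ edst e = v
    · obtain ⟨e, he, h⟩ := hu
      apply Finset.mem_union_right
      rcases h with h | h
      · apply Finset.mem_union_left; exact Finset.mem_image.2 ⟨e, he, h⟩
      · apply Finset.mem_union_right; exact Finset.mem_image.2 ⟨e, he, h⟩
    · apply Finset.mem_union_left
      have cov : ∀ e ∈ sE, (e.1 = v ∨ edst e = v) → fL e ∈ sF ∧ fR e ∈ sF := by
        intro e he hev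
        constructor
        · by_contra hc
          exact hu ⟨e, Finset.mem_union_left _ (Finset.mem_filter.2 ⟨he, hc⟩), hev⟩
        · by_contra hc
          exact hu ⟨e, Finset.mem_union_right _ (Finset.mem_filter.2 ⟨he, hc⟩), hev⟩
      refine (rot_edge (· ∈ sF) v ?_ e hev).1 (cov e he hev).1
      intro e' he'
      constructor
      · intro hh; exact (cov e' (h.1 _ hh) he').2
      · intro hh; exact (cov e' (h.2 _ hh) he').1
  have c1 := Finset.card_le_card hs
  have c2 := Finset.card_union_le sF ((uL sE sF ∪ uR sE sF).image Prod.fst ∪ (uL sE sF ∪ uR sE sF).image edst)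
  have c3 := Finset.card_union_le ((uL sE sF ∪ uR sE sF).image Prod.fst) ((uL sE sF ∪ uR sE sF).image edst)
  have c4 := Finset.card_image_le (s := uL sE sF ∪ uR sE sF) (f := Prod.fst)
  have c5 := Finset.card_image_le (s := uL sE sF ∪ uR sE sF) (f := edst)
  have c6 := Finset.card_union_le (uL sE sF) (uR sE sF)
  unfold mm
  omega

theorem finrank_supported {α : Type*} (s : Finset α) : Module.finrank ℤ (Finsupp.supported ℤ ℤ (s : Set α)) = s.card := by
  rw [(Finsupp.supportedEquivFinsupp (M := ℤ) (R := ℤ) (s : Set α)).finrank_eq]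
  simp

theorem finite_supported {α : Type*} (s : Finset α) : Module.Finite ℤ (Finsupp.supported ℤ ℤ (s : Set α)) :=
  Module.Finite.equiv (Finsupp.supportedEquivFinsupp (M := ℤ) (R := ℤ) (s : Set α)).symm

theorem rank_bound [Infinite (Cos g J)] (E : Finset (Ed g J)) (hE : Z1 g J ≤ B1 g J ⊔ Finsupp.supported ℤ ℤ (E : Set (Ed g J)))
    {sE : Finset (Ed g J)} {sF : Finset (Cos g J)} (hs : E ⊆ sE) :
    sE.card ≤ (sE.image Prod.fst ∪ sE.image edst).card + (E.card + (sF.card + mm sE sF)) := by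
  set S : Submodule ℤ (Ed g J →₀ ℤ) := Finsupp.supported ℤ ℤ (sE : Set (Ed g J)) with hS
  have : Module.Finite ℤ S := finite_supported sE
  set f : S →ₗ[ℤ] (Cos g J →₀ ℤ) := (d1 g J).domRestrict S with hf
  have rn : Module.finrank ℤ (LinearMap.range f) + Module.finrank ℤ (LinearMap.ker f) = Module.finrank ℤ S := by
    rw [← (LinearMap.quotKerEquivRange f).finrank_eq]
    exact Submodule.finrank_quotient_add_finrank _
  rw [finrank_supported] at rn
  have r1 : Module.finrank ℤ (LinearMap.range f) ≤ (sE.image Prod.fst ∪ sE.image edst).card := by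
    rw [← finrank_supported]
    have := finite_supported (sE.image Prod.fst ∪ sE.image edst)
    apply Submodule.finrank_mono
    rintro _ ⟨⟨z, hz⟩, rfl⟩
    rw [hf, LinearMap.domRestrict_apply, d1, Finsupp.linearCombination_apply]
    apply Submodule.sum_mem
    intro e he
    apply Submodule.smul_mem
    have he' : e ∈ sE := by
      rw [hS, Finsupp.mem_supported] at hz
      exact hz he
    apply Submodule.sub_mem
    · apply Finsupp.single_mem_supported
      simp only [Finset.coe_union, Finset.coe_image, Set.mem_union, Set.mem_image]
      right; exact ⟨e, he', rfl⟩
    · apply Finsupp.single_mem_supported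
      simp only [Finset.coe_union, Finset.coe_image, Set.mem_union, Set.mem_image]
      left; exact ⟨e, he', rfl⟩
  set U : Submodule ℤ (Cos g J →₀ ℤ) := S.comap (d2 g J) with hU
  set T : Finset (Cos g J) := sF ∪ ((uL sE sF).image fL ∪ (uR sE sF).image fR) with hT
  have hTc : T.card ≤ sF.card + mm sE sF := by
    have c2 := Finset.card_union_le sF ((uL sE sF).image fL ∪ (uR sE sF).image fR)
    have c3 := Finset.card_union_le ((uL sE sF).image fL) ((uR sE sF).image fR)
    have c4 := Finset.card_image_le (s := uL sE sF) (f := fL)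
    have c5 := Finset.card_image_le (s := uR sE sF) (f := fR)
    rw [← hT] at c2
    unfold mm
    omega
  let W : Submodule ℤ (Ed g J →₀ ℤ) := Finsupp.supported ℤ ℤ (E : Set (Ed g J))
  have : Module.Finite ℤ W := finite_supported E
  let ρ : (U × W) →ₗ[ℤ] (T → ℤ) × W :=
    LinearMap.prodMap (LinearMap.pi (fun t : T => (Finsupp.lapply (t : Cos g J)).comp U.subtype)) LinearMap.id
  have hρ : Function.Injective ρ := by
    rw [← LinearMap.ker_eq_bot, LinearMap.ker_eq_bot']
    rintro ⟨⟨A, hA⟩, w⟩ h0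
    have h1 : ∀ t ∈ T, A t = 0 := by
      intro t ht
      have := congrArg Prod.fst h0
      exact congrFun this ⟨t, ht⟩
    have h2 : w = 0 := congrArg Prod.snd h0
    have hAz : A = 0 := by
      apply d2_inj
      ext e
      by_cases he : e ∈ sE
      · rw [d2_apply]
        have l : fL e ∈ T := by
          by_cases hc : fL e ∈ sF
          · simp [T, hc]
          · apply Finset.mem_union_right; apply Finset.mem_union_left
            exact Finset.mem_image.2 ⟨e, Finset.mem_filter.2 ⟨he, hc⟩, rfl⟩
        have r : fR e ∈ T := by
          by_cases hc : fR e ∈ sF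
          · simp [T, hc]
          · apply Finset.mem_union_right; apply Finset.mem_union_right
            exact Finset.mem_image.2 ⟨e, Finset.mem_filter.2 ⟨he, hc⟩, rfl⟩
        rw [h1 _ l, h1 _ r]; simp
      · have : d2 g J A ∈ S := hA
        rw [hS, Finsupp.mem_supported'] at this
        rw [this e (by simpa using he)]; rfl
    subst h2
    simp [hAz]
  have : Module.Finite ℤ (U × W) := Module.Finite.of_injective ρ hρ
  have r3 : Module.finrank ℤ (U × W) ≤ T.card + E.card := by
    have := LinearMap.finrank_le_finrank_of_injective hρ
    have hfr : Module.Free ℤ W := Module.Free.of_equiv (Finsupp.supportedEquivFinsupp (M := ℤ) (R := ℤ) (E : Set (Ed g J))).symm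
    have e1 : Module.finrank ℤ ((T → ℤ) × W) = T.card + E.card := by
      rw [Module.finrank_prod, finrank_supported]; simp
    rw [e1] at this
    exact this
  let Ψ : (U × W) →ₗ[ℤ] (Ed g J →₀ ℤ) := LinearMap.coprod ((d2 g J).comp U.subtype) W.subtype
  have r4 : (LinearMap.ker f).map S.subtype ≤ LinearMap.range Ψ := by
    rintro _ ⟨⟨z, hz⟩, hk, rfl⟩
    have hk' : z ∈ Z1 g J := hk
    obtain ⟨_, ⟨A, rfl⟩, w, hw, hzz⟩ := Submodule.mem_sup.1 (hE hk')
    have hw' : w ∈ S := Finsupp.supported_mono (by exact_mod_cast hs) hw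
    have hA : A ∈ U := by
      show d2 g J A ∈ S
      have : d2 g J A = z - w := by rw [← hzz]; abel
      rw [this]; exact sub_mem hz hw'
    exact ⟨(⟨A, hA⟩, ⟨w, hw⟩), hzz⟩
  have r5 : Module.finrank ℤ (LinearMap.ker f) ≤ T.card + E.card := by
    rw [(Submodule.equivMapOfInjective S.subtype S.injective_subtype (LinearMap.ker f)).finrank_eq]
    exact (Submodule.finrank_mono r4).trans ((LinearMap.finrank_range_le Ψ).trans r3)
  omega

theorem iso_bound (hg : 2 ≤ g) [Infinite (Cos g J)] (E : Finset (Ed g J)) (hE : Z1 g J ≤ B1 g J ⊔ Finsupp.supported ℤ ℤ (E : Set (Ed g J)))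
    {sE : Finset (Ed g J)} {sF : Finset (Cos g J)} (hs : E ⊆ sE) (h : Cl sE sF) :
    sF.card ≤ 2 * mm sE sF + E.card := by
  have h1 := rank_bound (sF := sF) E hE hs
  have h2 := card_verts h
  have h3 := card_sides h
  have h4 : 8 * sF.card ≤ 4 * g * sF.card := Nat.mul_le_mul_right _ (by omega)
  omega

theorem level_ineq {sE : Finset (Ed g J)} {sF : Finset (Cos g J)} (h : Cl sE sF) (Y : Finset (Cos g J)) (hY : Disjoint sF Y)
    (T : Finset (Ed g J)) (hT1 : sE ⊆ T) (hT2 : touched Y ⊆ T)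
    (hmin : 2 * (mm sE sF : ℤ) - sF.card ≤ 2 * (mm (sE ∪ touched Y) (sF ∪ Y) : ℤ) - (sF ∪ Y).card) :
    2 * ∑ e ∈ sE, ((if fL e ∈ Y then (1 : ℤ) else 0) + (if fR e ∈ Y then 1 else 0)) + Y.card ≤
      2 * ∑ e ∈ T \ sE, |(if fL e ∈ Y then (1 : ℤ) else 0) - (if fR e ∈ Y then 1 else 0)| := by
  have h' : Cl (sE ∪ touched Y) (sF ∪ Y) := by
    constructor
    · intro e he
      rcases Finset.mem_union.1 he with he | he
      · exact Finset.mem_union_left _ (h.1 e he)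
      · exact Finset.mem_union_right _ (mem_touched.2 (Or.inl he))
    · intro e he
      rcases Finset.mem_union.1 he with he | he
      · exact Finset.mem_union_left _ (h.2 e he)
      · exact Finset.mem_union_right _ (mem_touched.2 (Or.inr he))
  have c1 := card_sides h
  have c2 := card_sides h'
  rw [Finset.card_union_of_disjoint hY] at c2 hmin
  have c3 : ((sE ∪ touched Y).card : ℤ) = sE.card + ∑ e ∈ T \ sE, (if fL e ∈ Y ∨ fR e ∈ Y then (1 : ℤ) else 0) := by
    rw [Finset.sum_boole]
    have : sE ∪ touched Y = sE ∪ (T \ sE).filter (fun e => fL e ∈ Y ∨ fR e ∈ Y) := by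
      ext e
      simp only [Finset.mem_union, mem_touched, Finset.mem_filter, Finset.mem_sdiff]
      constructor
      · rintro (h | h)
        · exact Or.inl h
        · by_cases he : e ∈ sE
          · exact Or.inl he
          · exact Or.inr ⟨⟨hT2 (mem_touched.2 h), he⟩, h⟩
      · rintro (h | h)
        · exact Or.inl h
        · exact Or.inr h.2
    rw [this, Finset.card_union_of_disjoint]
    · push_cast; rfl
    · apply Finset.disjoint_left.2
      intro e he he'
      simp only [Finset.mem_filter, Finset.mem_sdiff] at he'
      exact he'.1.2 he
  have c4 : ∑ e ∈ T, ((if fL e ∈ Y then (1 : ℤ) else 0) + (if fR e ∈ Y then 1 else 0)) = 4 * g * Y.card := by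
    rw [Finset.sum_add_distrib, Finset.sum_boole, Finset.sum_boole, card_L, card_R]
    · push_cast; ring
    · intro e he; exact hT2 (mem_touched.2 (Or.inr he))
    · intro e he; exact hT2 (mem_touched.2 (Or.inl he))
  rw [← Finset.sum_sdiff hT1] at c4
  have c5 : ∑ e ∈ T \ sE, |(if fL e ∈ Y then (1 : ℤ) else 0) - (if fR e ∈ Y then 1 else 0)| =
     2 * ∑ e ∈ T \ sE, (if fL e ∈ Y ∨ fR e ∈ Y then (1 : ℤ) else 0) -
      ∑ e ∈ T \ sE, ((if fL e ∈ Y then (1 : ℤ) else 0) + (if fR e ∈ Y then 1 else 0)) := by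
    rw [Finset.mul_sum, ← Finset.sum_sub_distrib]
    apply Finset.sum_congr rfl
    intro e _
    by_cases a : fL e ∈ Y <;> by_cases b : fR e ∈ Y <;> simp [a, b]
  rw [c5]
  have c1' : (2 : ℤ) * sE.card = 4 * g * sF.card + mm sE sF := by exact_mod_cast c1
  have c2' : (2 : ℤ) * (sE ∪ touched Y).card = 4 * g * (sF.card + Y.card) + mm (sE ∪ touched Y) (sF ∪ Y) := by exact_mod_cast c2
  push_cast at hmin
  rw [c3] at c2'
  linarith

theorem func_ineq {sE : Finset (Ed g J)} {sF : Finset (Cos g J)} (h : Cl sE sF)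
    (hmin : ∀ Y, Disjoint sF Y → 2 * (mm sE sF : ℤ) - sF.card ≤ 2 * (mm (sE ∪ touched Y) (sF ∪ Y) : ℤ) - (sF ∪ Y).card)
    (Y : Finset (Cos g J)) (hY : Disjoint sF Y)
    (T : Finset (Ed g J)) (hT1 : sE ⊆ T) (hT2 : touched Y ⊆ T) (N : Cos g J → ℕ) (hN : ∀ v, v ∉ Y → N v = 0) :
    2 * ∑ e ∈ sE, ((N (fL e) : ℤ) + N (fR e)) + ∑ v ∈ Y, (N v : ℤ) ≤
      2 * ∑ e ∈ T \ sE, |(N (fL e) : ℤ) - N (fR e)| := by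
  induction hn : ∑ v ∈ Y, N v using Nat.strong_induction_on generalizing N with
  | _ n ih =>
  by_cases hz : ∀ v, N v = 0
  · simp [hz]
  · push Not at hz
    obtain ⟨v0, hv0⟩ := hz
    set Y' := Y.filter (fun v => N v ≠ 0) with hY'
    have hm : ∀ v, v ∈ Y' ↔ N v ≠ 0 := by
      intro v
      simp only [hY', Finset.mem_filter]
      constructor
      · exact fun h => h.2
      · intro h; refine ⟨?_, h⟩
        by_contra hc; exact h (hN v hc)
    have hsub : Y' ⊆ Y := Finset.filter_subset _ _
    have h1 := level_ineq h Y' (Finset.disjoint_of_subset_right hsub hY) T hT1 (by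
      intro e he
      apply hT2
      rw [mem_touched] at he ⊢
      exact he.imp (fun h => hsub h) (fun h => hsub h)) (hmin Y' (Finset.disjoint_of_subset_right hsub hY))
    have hd : ∀ v, (N v : ℤ) = ((N v - 1 : ℕ) : ℤ) + (if v ∈ Y' then 1 else 0) := by
      intro v
      simp only [hm]
      split_ifs with hh
      · have : 1 ≤ N v := Nat.one_le_iff_ne_zero.2 hh
        push_cast [this]; ring
      · simp only [ne_eq, not_not] at hh; rw [hh]; simp
    have hsum : (∑ v ∈ Y, (N v : ℤ)) = ∑ v ∈ Y, ((N v - 1 : ℕ) : ℤ) + Y'.card := by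
      rw [Finset.sum_congr rfl (fun v _ => hd v), Finset.sum_add_distrib, Finset.sum_boole]
      congr 3
      ext v; simp only [Finset.mem_filter]; constructor
      · exact fun h => h.2
      · exact fun h => ⟨hsub h, h⟩
    have hpos : 0 < Y'.card := Finset.card_pos.2 ⟨v0, (hm v0).2 hv0⟩
    have h2 := ih (∑ v ∈ Y, (N v - 1)) (by
      have : ((∑ v ∈ Y, (N v - 1) : ℕ) : ℤ) < (∑ v ∈ Y, N v : ℕ) := by
        push_cast
        rw [hsum]
        have : (0 : ℤ) < Y'.card := by exact_mod_cast hpos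
        have h3 : ∑ v ∈ Y, ((N v - 1 : ℕ) : ℤ) = ∑ v ∈ Y, ((N v - 1 : ℕ) : ℤ) := rfl
        linarith
      rw [← hn]; exact_mod_cast this) (fun v => N v - 1) (fun v hv => by simp [hN v hv]) rfl
    have e1 : ∑ e ∈ sE, ((N (fL e) : ℤ) + N (fR e)) = ∑ e ∈ sE, (((N (fL e) - 1 : ℕ) : ℤ) + (N (fR e) - 1 : ℕ)) +
        ∑ e ∈ sE, ((if fL e ∈ Y' then (1 : ℤ) else 0) + (if fR e ∈ Y' then 1 else 0)) := by
      rw [← Finset.sum_add_distrib]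
      apply Finset.sum_congr rfl
      intro e _
      rw [hd (fL e), hd (fR e)]; ring
    have e2 : ∑ e ∈ T \ sE, |(N (fL e) : ℤ) - N (fR e)| = ∑ e ∈ T \ sE, |((N (fL e) - 1 : ℕ) : ℤ) - (N (fR e) - 1 : ℕ)| +
        ∑ e ∈ T \ sE, |(if fL e ∈ Y' then (1 : ℤ) else 0) - (if fR e ∈ Y' then 1 else 0)| := by
      rw [← Finset.sum_add_distrib]
      apply Finset.sum_congr rfl
      intro e _
      simp only [hm]
      generalize N (fL e) = x
      generalize N (fR e) = y
      rcases x with _ | x <;> rcases y with _ | y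
      · simp
      · simp only [Nat.cast_add, Nat.cast_one, Nat.add_sub_cancel, ne_eq, Nat.add_eq_zero_iff, one_ne_zero, and_false,
          not_false_eq_true, if_true, not_true_eq_false, if_false, Nat.cast_zero]
        rw [abs_of_nonpos (by omega), abs_of_nonpos (by omega), abs_of_nonpos (by omega)]; simp
      · simp only [Nat.cast_add, Nat.cast_one, Nat.add_sub_cancel, ne_eq, Nat.add_eq_zero_iff, one_ne_zero, and_false,
          not_false_eq_true, if_true, not_true_eq_false, if_false, Nat.cast_zero]
        rw [abs_of_nonneg (by omega), abs_of_nonneg (by omega), abs_of_nonneg (by omega)]; simp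
      · simp
    rw [e1, e2, hsum]
    linarith

theorem exists_K (hg : 2 ≤ g) [Infinite (Cos g J)] (E : Finset (Ed g J)) (hE : Z1 g J ≤ B1 g J ⊔ Finsupp.supported ℤ ℤ (E : Set (Ed g J))) :
    ∃ (sE : Finset (Ed g J)) (sF : Finset (Cos g J)), E ⊆ sE ∧ Cl sE sF ∧
      ∀ Y, Disjoint sF Y → 2 * (mm sE sF : ℤ) - sF.card ≤ 2 * (mm (sE ∪ touched Y) (sF ∪ Y) : ℤ) - (sF ∪ Y).card := by
  let P : ℕ → Prop := fun n => ∃ (sE : Finset (Ed g J)) (sF : Finset (Cos g J)), E ⊆ sE ∧ Cl sE sF ∧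
    n = 2 * mm sE sF + E.card - sF.card
  have hP : ∃ n, P n := ⟨_, E, ∅, subset_rfl, ⟨by simp, by simp⟩, rfl⟩
  obtain ⟨sE, sF, h1, h2, h3⟩ := Nat.find_spec hP
  refine ⟨sE, sF, h1, h2, ?_⟩
  intro Y hY
  have h' : Cl (sE ∪ touched Y) (sF ∪ Y) := by
    constructor
    · intro e he
      rcases Finset.mem_union.1 he with he | he
      · exact Finset.mem_union_left _ (h2.1 e he)
      · exact Finset.mem_union_right _ (mem_touched.2 (Or.inl he))
    · intro e he
      rcases Finset.mem_union.1 he with he | he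
      · exact Finset.mem_union_left _ (h2.2 e he)
      · exact Finset.mem_union_right _ (mem_touched.2 (Or.inr he))
  have h4 : E ⊆ sE ∪ touched Y := h1.trans Finset.subset_union_left
  have := Nat.find_min' hP ⟨sE ∪ touched Y, sF ∪ Y, h4, h', rfl⟩
  rw [h3] at this
  have b1 := iso_bound hg E hE h1 h2
  have b2 := iso_bound hg E hE h4 h'
  omega

end PP4

section PP5
open Classical

variable {g : ℕ} {J : Subgroup (Gamma g)}

/-- l1 norm -/
def nrm {α : Type*} (z : α →₀ ℤ) : ℕ := ∑ e ∈ z.support, (z e).natAbs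

theorem nrm_eq {α : Type*} (z : α →₀ ℤ) (T : Finset α) (h : ∀ e, z e ≠ 0 → e ∈ T) : nrm z = ∑ e ∈ T, (z e).natAbs := by
  unfold nrm
  apply Finset.sum_subset
  · intro e he; exact h e (Finsupp.mem_support_iff.1 he)
  · intro e _ he; simpa using he

theorem nrm_add_le {α : Type*} (a b : α →₀ ℤ) : nrm (a + b) ≤ nrm a + nrm b := by
  rw [nrm_eq (a + b) (a.support ∪ b.support), nrm_eq a (a.support ∪ b.support), nrm_eq b (a.support ∪ b.support), ← Finset.sum_add_distrib]
  · apply Finset.sum_le_sum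
    intro e _
    exact Int.natAbs_add_le _ _
  · intro e he; simp [he]
  · intro e he; simp [he]
  · intro e he
    simp only [Finset.mem_union, Finsupp.mem_support_iff]
    by_contra hc
    push Not at hc
    apply he; simp [hc.1, hc.2]

theorem nrm_eq_zero {α : Type*} {z : α →₀ ℤ} (h : nrm z = 0) : z = 0 := by
  ext e
  by_contra hc
  have := (Finset.sum_eq_zero_iff.1 h) e (Finsupp.mem_support_iff.2 hc)
  exact hc (Int.natAbs_eq_zero.1 this)

theorem nrm_dch_le (d : Ed g J × Bool) : nrm (dch d) ≤ 1 := by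
  rcases d with ⟨e, b⟩
  rw [nrm_eq _ {e}]
  · cases b <;> simp [dch]
  · intro e' he'
    by_contra hc
    simp only [Finset.mem_singleton] at hc
    apply he'
    have : ¬ e = e' := fun h => hc h.symm
    cases b <;> simp [dch, this]

theorem nrm_chL_le (L : List (Ed g J × Bool)) : nrm (chL L) ≤ L.length := by
  induction L with
  | nil => simp [nrm]
  | cons d L ih =>
    rw [chL_cons]
    have := nrm_add_le (dch d) (chL L)
    have := nrm_dch_le d
    simp; omega

/-- positive darts of a chain -/
def posD (z : Ed g J →₀ ℤ) (d : Ed g J × Bool) : Prop := if d.2 then 0 < z d.1 else z d.1 < 0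

theorem nrm_sub_dch (z : Ed g J →₀ ℤ) (d : Ed g J × Bool) (h : posD z d) : nrm (z - dch d) + 1 = nrm z := by
  have hs : z d.1 ≠ 0 := by
    unfold posD at h; split_ifs at h <;> omega
  have h0 : ∀ e, e ≠ d.1 → dch d e = 0 := by
    intro e he
    have : ¬ d.1 = e := fun h => he h.symm
    unfold dch; split_ifs <;> simp [this]
  have hd : d.1 ∈ z.support := Finsupp.mem_support_iff.2 hs
  rw [nrm_eq (z - dch d) z.support, nrm, ← Finset.add_sum_erase _ _ hd, ← Finset.add_sum_erase _ _ hd]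
  · have e1 : ∑ e ∈ z.support.erase d.1, ((z - dch d) e).natAbs = ∑ e ∈ z.support.erase d.1, (z e).natAbs := by
      apply Finset.sum_congr rfl
      intro e he
      rw [Finsupp.sub_apply, h0 e (Finset.ne_of_mem_erase he), sub_zero]
    have e2 : ((z - dch d) d.1).natAbs + 1 = (z d.1).natAbs := by
      rw [Finsupp.sub_apply]
      unfold posD at h
      unfold dch
      split_ifs at h ⊢ <;> simp <;> omega
    omega
  · intro e he
    rw [Finsupp.mem_support_iff]
    by_cases hc : e = d.1
    · rw [hc]; exact hs
    · rw [Finsupp.sub_apply, h0 e hc, sub_zero] at he; exact he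

theorem posD_uniq {z : Ed g J →₀ ℤ} {e : Ed g J} {b b' : Bool} (h : posD z (e, b)) (h' : posD z (e, b')) : b = b' := by
  cases b <;> cases b' <;> simp [posD] at h h' ⊢ <;> omega

theorem nrm_sub_chL (z : Ed g J →₀ ℤ) (L : List (Ed g J × Bool)) (hL : L.Nodup) (h : ∀ d ∈ L, posD z d) :
    nrm (z - chL L) + L.length = nrm z := by
  induction L with
  | nil => simp
  | cons d L ih =>
    rw [List.nodup_cons] at hL
    have ih' := ih hL.2 (fun d hd => h d (by simp [hd]))
    have hd := h d (by simp)
    have h0 : chL L d.1 = 0 := by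
      by_contra hc
      obtain ⟨b, hb⟩ := chL_support L d.1 hc
      have := h _ (List.mem_cons_of_mem d hb)
      have hbb := posD_uniq (e := d.1) (b := b) (b' := d.2) this hd
      rw [hbb] at hb
      exact hL.1 hb
    have := nrm_sub_dch (z - chL L) d (by
      unfold posD at hd ⊢
      rw [Finsupp.sub_apply, h0, sub_zero]; exact hd)
    rw [chL_cons, List.length_cons]
    have e : z - (dch d + chL L) = z - chL L - dch d := by abel
    rw [e]; omega

/-- tail of a dart -/
def dt (d : Ed g J × Bool) : Cos g J := if d.2 then d.1.1 else edst d.1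
/-- head of a dart -/
def dh (d : Ed g J × Bool) : Cos g J := if d.2 then edst d.1 else d.1.1

theorem d1_apply (z : Ed g J →₀ ℤ) (v : Cos g J) : d1 g J z v =
    ∑ e ∈ z.support, z e * ((if edst e = v then 1 else 0) - (if e.1 = v then 1 else 0)) := by
  rw [d1, Finsupp.linearCombination_apply, Finsupp.sum, Finsupp.finsetSum_apply]
  apply Finset.sum_congr rfl
  intro e _
  simp [Finsupp.single_apply]

theorem next_dart (z : Ed g J →₀ ℤ) (hz : z ∈ Z1 g J) (d : Ed g J × Bool) (hd : posD z d) :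
    ∃ d', posD z d' ∧ dt d' = dh d := by
  by_contra hc
  push Not at hc
  have h0 : d1 g J z (dh d) = 0 := by
    have : d1 g J z = 0 := hz
    rw [this]; rfl
  rw [d1_apply] at h0
  have hs : z d.1 ≠ 0 := by
    unfold posD at hd; split_ifs at hd <;> omega
  have hp : ∀ e, 0 < z e → e.1 ≠ dh d := fun e he => hc (e, true) (by simpa [posD] using he)
  have hn : ∀ e, z e < 0 → edst e ≠ dh d := fun e he => hc (e, false) (by simpa [posD] using he)
  have nonneg : ∀ e, 0 ≤ z e * ((if edst e = dh d then 1 else 0) - (if e.1 = dh d then 1 else 0)) := by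
    intro e
    rcases lt_trichotomy (z e) 0 with h | h | h
    · simp only [hn e h, if_false]; split_ifs <;> simp; omega
    · simp [h]
    · simp only [hp e h, if_false]; split_ifs <;> simp; omega
  have := (Finset.sum_eq_zero_iff_of_nonneg (fun e _ => nonneg e)).1 h0 d.1 (Finsupp.mem_support_iff.2 hs)
  rcases d with ⟨e, b⟩
  cases b
  · have h : z e < 0 := by simpa [posD] using hd
    have h1 := hn e h
    simp only [dh, Bool.false_eq_true, if_false] at this h1
    simp [h1] at this; omega
  · have h : 0 < z e := by simpa [posD] using hd
    have h1 := hp e h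
    simp only [dh, if_true] at this h1
    simp [h1] at this; omega

theorem extract (z : Ed g J →₀ ℤ) (hz : z ∈ Z1 g J) (h0 : z ≠ 0) :
    ∃ (v : Cos g J) (u : List (Letter g)), u ≠ [] ∧ rmul g J (wordG u) v = v ∧
      nrm (z - ch v u) + u.length = nrm z := by
  let D := {d : Ed g J × Bool // posD z d}
  have fin : Finite D := by
    have : {d : Ed g J × Bool | posD z d} ⊆ ((z.support ×ˢ (Finset.univ : Finset Bool) : Finset _) : Set (Ed g J × Bool)) := by
      intro d hd
      simp only [Finset.coe_product, Set.mem_prod, Finset.mem_coe, Finsupp.mem_support_iff, Finset.mem_univ, and_true]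
      simp only [Set.mem_ofPred_eq, posD] at hd
      split_ifs at hd <;> omega
    exact (Set.Finite.subset (Finset.finite_toSet _) this).to_subtype
  have hx : ∀ d : D, ∃ d' : D, dt d'.1 = dh d.1 := by
    rintro ⟨d, hd⟩
    obtain ⟨d', h1, h2⟩ := next_dart z hz d hd
    exact ⟨⟨d', h1⟩, h2⟩
  choose nxt hnxt using hx
  have hne : ∃ d0 : D, True := by
    have : ∃ e, z e ≠ 0 := by
      by_contra hc; push Not at hc; exact h0 (Finsupp.ext hc)
    obtain ⟨e, he⟩ := this
    rcases lt_or_gt_of_ne he with h | h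
    · exact ⟨⟨(e, false), by simpa [posD] using h⟩, trivial⟩
    · exact ⟨⟨(e, true), by simpa [posD] using h⟩, trivial⟩
  obtain ⟨d0, -⟩ := hne
  obtain ⟨x, hx⟩ : ∃ x : D, x ∈ Function.periodicPts nxt := by
    obtain ⟨i, j, hij, he⟩ := Finite.exists_ne_map_eq_of_infinite (fun n : ℕ => nxt^[n] d0)
    wlog hlt : i < j generalizing i j
    · exact this j i hij.symm he.symm (by omega)
    refine ⟨nxt^[i] d0, j - i, by omega, ?_⟩
    show nxt^[j - i] (nxt^[i] d0) = nxt^[i] d0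
    rw [← Function.iterate_add_apply, Nat.sub_add_cancel hlt.le, he]
  set n := Function.minimalPeriod nxt x with hn
  have hnpos : 0 < n := Function.minimalPeriod_pos_of_mem_periodicPts hx
  have hw : ∀ k, (cover g J).WalkFrom (dt x.1) (dt (nxt^[k] x).1) ((List.range k).map (fun i => (nxt^[i] x).1)) := by
    intro k
    induction k with
    | zero => exact Complex.WalkFrom.nil (Y := cover g J) _
    | succ k ih =>
      have e : (List.range (k+1)).map (fun i => (nxt^[i] x).1) = (List.range k).map (fun i => (nxt^[i] x).1) ++ [(nxt^[k] x).1] := by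
        rw [List.range_succ, List.map_append]; rfl
      have e2 : dt (nxt^[k+1] x).1 = dh (nxt^[k] x).1 := by rw [Function.iterate_succ_apply', hnxt]
      have h2 := walk_append ih (Complex.WalkFrom.cons (Y := cover g J) (nxt^[k] x).1 (Complex.WalkFrom.nil (Y := cover g J) _))
      have e3 := e.symm
      have e4 := e2.symm
      have h3 : (cover g J).WalkFrom (dt x.1) (dh (nxt^[k] x).1) ((List.range k).map (fun i => (nxt^[i] x).1) ++ [(nxt^[k] x).1]) := h2
      exact e3 ▸ e4 ▸ h3
  have hwn := hw n
  have hper : nxt^[n] x = x := Function.iterate_minimalPeriod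
  rw [hper] at hwn
  set L : List (Ed g J × Bool) := (List.range n).map (fun i => (nxt^[i] x).1) with hL
  have hnd : L.Nodup := by
    apply List.Nodup.map_on _ List.nodup_range
    intro a ha b hb hab
    rw [List.mem_range] at ha hb
    exact Function.iterate_injOn_Iio_minimalPeriod (f := nxt) (x := x) ha hb (Subtype.ext hab)
  have hpos : ∀ d ∈ L, posD z d := by
    intro d hd
    obtain ⟨i, _, rfl⟩ := List.mem_map.1 hd
    exact (nxt^[i] x).2
  have hlen : L.length = n := by simp [hL]
  obtain ⟨h1, h2⟩ := walk_eq _ _ hwn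
  have h3 := nrm_sub_chL z L hnd hpos
  refine ⟨dt x.1, (cover g J).wordOf L, ?_, h2.symm, ?_⟩
  · intro hc
    have : ((cover g J).wordOf L).length = L.length := List.length_map _
    rw [hc, hlen] at this
    simp at this; omega
  · have : ((cover g J).wordOf L).length = L.length := List.length_map _
    rw [this, ch]
    have e : chL (relWalk g J (dt x.1) ((cover g J).wordOf L)) = chL L := congrArg chL h1.symm
    rw [e]; exact h3

/-! division of minimal cycles -/

theorem hermite (q : ℕ) (hq : 0 < q) (m : ℤ) :
    ∑ j ∈ Finset.range q, (m - (j + 1)) / (q : ℤ) = ∑ j ∈ Finset.range q, (0 - (j + 1)) / (q : ℤ) + m := by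
  have step : ∀ m : ℤ, ∑ j ∈ Finset.range q, (m + 1 - (j + 1)) / (q : ℤ) = ∑ j ∈ Finset.range q, (m - (j + 1)) / (q : ℤ) + 1 := by
    intro m
    have h1 : ∑ j ∈ Finset.range q, ((m - ((j + 1 : ℕ) : ℤ)) / (q : ℤ) - (m - (j : ℕ)) / (q : ℤ)) = (m - q) / q - (m - (0 : ℕ)) / (q : ℤ) :=
      Finset.sum_range_sub (fun j : ℕ => (m - (j : ℤ)) / (q : ℤ)) q
    rw [Finset.sum_sub_distrib] at h1
    have h2 : (m - q) / (q : ℤ) = m / q - 1 := by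
      rw [Int.sub_ediv_of_dvd _ (dvd_refl _), Int.ediv_self (by omega)]
    rw [h2] at h1
    have h3 : ∀ j : ℕ, m + 1 - ((j : ℤ) + 1) = m - j := by intro j; ring
    simp only [h3]
    push_cast at h1
    simp only [sub_zero] at h1
    linarith
  induction m using Int.induction_on with
  | zero => simp
  | succ i ih => rw [step, ih]; ring
  | pred i ih =>
    have := step (-(i : ℤ) - 1)
    rw [show -(i : ℤ) - 1 + 1 = -i by ring, ih] at this
    linarith

theorem div_step (q : ℕ) (hq : 0 < q) (m j : ℤ) :
    (m - j) / (q : ℤ) - (m - (j + 1)) / (q : ℤ) = if (q : ℤ) ∣ m - j then 1 else 0 := by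
  have hq' : (q : ℤ) ≠ 0 := by omega
  have hq2 : (0 : ℤ) < q := by omega
  set a := m - j with ha
  rw [show m - (j + 1) = a - 1 by rw [ha]; ring]
  have e1 := Int.mul_ediv_add_emod a q
  have e2 := Int.emod_nonneg a hq'
  have e3 := Int.emod_lt_of_pos a hq2
  split_ifs with h
  · have h0 : a % q = 0 := Int.emod_eq_zero_of_dvd h
    have : (a - 1) / (q : ℤ) = a / q - 1 := by
      rw [Int.ediv_eq_iff_of_pos hq2]
      constructor <;> nlinarith
    omega
  · have h0 : a % q ≠ 0 := fun hc => h (Int.dvd_of_emod_eq_zero hc)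
    have : (a - 1) / (q : ℤ) = a / q := by
      rw [Int.ediv_eq_iff_of_pos hq2]
      have : 1 ≤ a % q := by omega
      constructor <;> nlinarith
    omega

theorem natAbs_sum_mono (s : Finset ℕ) (f : ℕ → ℤ) (h : (∀ j ∈ s, 0 ≤ f j) ∨ (∀ j ∈ s, f j ≤ 0)) :
    ∑ j ∈ s, (f j).natAbs = (∑ j ∈ s, f j).natAbs := by
  zify
  rcases h with h | h
  · rw [abs_of_nonneg (Finset.sum_nonneg h)]
    exact Finset.sum_congr rfl (fun j hj => abs_of_nonneg (h j hj))
  · rw [abs_of_nonpos (Finset.sum_nonpos h), ← Finset.sum_neg_distrib]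
    exact Finset.sum_congr rfl (fun j hj => abs_of_nonpos (h j hj))

theorem min_prim (z : Ed g J →₀ ℤ) (hz : z ∈ Z1 g J) (hzB : z ∉ B1 g J)
    (hmin : ∀ y, y ∈ Z1 g J → y ∉ B1 g J → nrm z ≤ nrm y)
    (c : Ed g J →₀ ℤ) (k : ℤ) (N : Cos g J →₀ ℤ) (hk : z = k • c + d2 g J N) : k.natAbs ≤ 1 := by
  by_contra hk2
  set q := k.natAbs with hq
  have hq0 : 0 < q := by omega
  have hq2 : (0 : ℤ) < q := by omega
  have hqk : (q : ℤ) ∣ k := by rw [hq]; exact Int.natAbs_dvd.2 dvd_rfl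
  let φ : ℕ → ℤ → ℤ := fun j m => (m - (j + 1)) / (q : ℤ)
  have φmono : ∀ j, Monotone (φ j) := by
    intro j a b hab
    exact Int.ediv_le_ediv hq2 (by omega)
  let s : ℕ → (Ed g J →₀ ℤ) := fun j => Finsupp.onFinset z.support (fun e => φ j (N (fR e) + z e) - φ j (N (fR e))) (by
    intro e he
    rw [Finsupp.mem_support_iff]
    intro hc
    apply he
    rw [hc]; simp)
  have hs : ∀ j e, s j e = φ j (N (fR e) + z e) - φ j (N (fR e)) := fun j e => rfl
  have hsum : ∀ e, ∑ j ∈ Finset.range q, s j e = z e := by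
    intro e
    simp only [hs, Finset.sum_sub_distrib, φ]
    rw [hermite q hq0, hermite q hq0 (N (fR e))]; ring
  have hsum' : ∑ j ∈ Finset.range q, s j = z := by
    ext e; rw [Finsupp.finsetSum_apply, hsum]
  have hnorm : ∑ j ∈ Finset.range q, nrm (s j) = nrm z := by
    have : ∀ j, nrm (s j) = ∑ e ∈ z.support, (s j e).natAbs := by
      intro j
      apply nrm_eq
      intro e he
      exact (Finsupp.support_onFinset_subset (Finsupp.mem_support_iff.2 he))
    simp only [this]
    rw [Finset.sum_comm, nrm]
    apply Finset.sum_congr rfl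
    intro e _
    rw [natAbs_sum_mono, hsum]
    rcases le_total 0 (z e) with h | h
    · left; intro j _; rw [hs]; have := φmono j (show N (fR e) ≤ N (fR e) + z e by omega); omega
    · right; intro j _; rw [hs]; have := φmono j (show N (fR e) + z e ≤ N (fR e) by omega); omega
  have hstep : ∀ j, j + 1 < q → s j - s (j + 1) ∈ B1 g J := by
    intro j hj
    refine ⟨Finsupp.onFinset N.support (fun v => if (q : ℤ) ∣ N v - (j + 1) then 1 else 0) ?_, ?_⟩
    · intro v hv
      rw [Finsupp.mem_support_iff]
      intro hc
      apply hv
      rw [hc, if_neg]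
      intro hd
      have h1 : (q : ℤ) ∣ (j + 1 : ℤ) := by
        have := (dvd_neg.2 hd); simpa using this
      have := Int.le_of_dvd (by omega) h1
      omega
    · ext e
      rw [d2_apply, Finsupp.sub_apply, hs, hs, Finsupp.onFinset_apply, Finsupp.onFinset_apply]
      simp only [φ]
      have e1 := div_step q hq0 (N (fR e) + z e) (j + 1)
      have e2 := div_step q hq0 (N (fR e)) (j + 1)
      have e3 : ((q : ℤ) ∣ N (fR e) + z e - (j + 1)) ↔ ((q : ℤ) ∣ N (fL e) - (j + 1)) := by
        have hze : z e = k * c e + (N (fL e) - N (fR e)) := by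
          rw [hk, Finsupp.add_apply, Finsupp.smul_apply, d2_apply]; rfl
        rw [hze, show N (fR e) + (k * c e + (N (fL e) - N (fR e))) - ((j : ℤ) + 1) = k * c e + (N (fL e) - (j + 1)) by ring]
        exact dvd_add_right (hqk.mul_right _)
      simp only [e3] at e1
      push_cast
      rw [← e1, ← e2]; ring
  have hall : ∀ j, j < q → s 0 - s j ∈ B1 g J := by
    intro j
    induction j with
    | zero => simp
    | succ j ih =>
      intro hj
      have := add_mem (ih (by omega)) (hstep j hj)
      simpa using this
  have hqs : (q : ℤ) • s 0 - z ∈ B1 g J := by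
    have : (q : ℤ) • s 0 - z = ∑ j ∈ Finset.range q, (s 0 - s j) := by
      rw [Finset.sum_sub_distrib, hsum']; simp
    rw [this]
    exact Submodule.sum_mem _ (fun j hj => hall j (Finset.mem_range.1 hj))
  have hs0Z : s 0 ∈ Z1 g J := by
    have h1 : (q : ℤ) • s 0 ∈ Z1 g J := by
      have := add_mem (B1_le_Z1 hqs) hz; simpa using this
    have h2 : d1 g J ((q : ℤ) • s 0) = 0 := h1
    rw [map_smul] at h2
    show d1 g J (s 0) = 0
    ext v
    have := DFunLike.congr_fun h2 v
    simp only [Finsupp.smul_apply, smul_eq_mul, Finsupp.coe_zero, Pi.zero_apply, mul_eq_zero] at this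
    rcases this with h | h
    · omega
    · simpa using h
  have hs0B : s 0 ∉ B1 g J := by
    intro hc
    apply hzB
    have := sub_mem ((B1 g J).smul_mem (q : ℤ) hc) hqs
    simpa using this
  have hle : ∀ j ∈ Finset.range q, nrm z ≤ nrm (s j) := by
    intro j hj
    have hb := hall j (Finset.mem_range.1 hj)
    apply hmin
    · have := sub_mem hs0Z (B1_le_Z1 hb); simpa using this
    · intro hc
      apply hs0B
      have := add_mem hb hc; simpa using this
  have h5 := Finset.card_nsmul_le_sum _ _ _ hle
  rw [hnorm, Finset.card_range, smul_eq_mul] at h5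
  have h6 : nrm z = 0 := by
    by_contra hc
    have : 2 * nrm z ≤ q * nrm z := Nat.mul_le_mul_right _ (by omega)
    omega
  exact hzB (by rw [nrm_eq_zero h6]; exact zero_mem _)

end PP5

section PP6
open Classical
open scoped IsMulCommutative

variable {g : ℕ} {H : Subgroup (Gamma g)}

/-- section of the coset map -/
def sc (v : Cos g H) : Gamma g := (cos_ind v).choose
theorem mk_sc (v : Cos g H) : mkCos g H (sc v) = v := (cos_ind v).choose_spec.symm

theorem sc_mem (v : Cos g H) (x : Gamma g) : sc v * x * (sc (rmul g H x v))⁻¹ ∈ H := by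
  rw [← mkCos_eq, mk_sc, ← rmul_mk, mk_sc]

/-- holonomy of an edge -/
def hol (e : Ed g H) : Additive H := Additive.ofMul ⟨sc e.1 * PresentedGroup.of e.2 * (sc (edst e))⁻¹, sc_mem _ _⟩

/-- holonomy of a chain -/
def psi (H : Subgroup (Gamma g)) [IsMulCommutative H] : (Ed g H →₀ ℤ) →+ Additive H :=
  Finsupp.liftAddHom (fun e => (zmultiplesHom (Additive H)) (hol e))

theorem psi_single [IsMulCommutative H] (e : Ed g H) : psi H (Finsupp.single e 1) = hol e := by
  simp [psi]

theorem psi_ch [IsMulCommutative H] (v : Cos g H) (w : List (Letter g)) :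
    psi H (ch v w) = Additive.ofMul ⟨sc v * wordG w * (sc (rmul g H (wordG w) v))⁻¹, sc_mem _ _⟩ := by
  induction w generalizing v with
  | nil => 
    simp only [ch_nil, map_zero]
    symm
    apply Additive.toMul.injective
    apply Subtype.ext
    simp
  | cons l w ih =>
    rw [ch_cons, map_add, ih]
    apply Additive.toMul.injective
    apply Subtype.ext
    rcases l with ⟨l, b⟩
    cases b
    · rw [ch_neg, map_neg, psi_single]
      simp [hol, edst, letterG, mul_assoc]
    · rw [ch_pos, psi_single]
      simp [hol, edst, letterG, mul_assoc]

theorem psi_d2 [IsMulCommutative H] (A : Cos g H →₀ ℤ) : psi H (d2 g H A) = 0 := by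
  induction A using Finsupp.induction_linear with
  | zero => simp
  | add a b ha hb => rw [map_add, map_add, ha, hb, add_zero]
  | single v n =>
    rw [d2_single, map_zsmul, psi_ch]
    convert smul_zero n
    apply Additive.toMul.injective
    apply Subtype.ext
    simp [wordG_relator]

theorem psi_closed [IsMulCommutative H] (y : Gamma g) (u : List (Letter g)) (h : rmul g H (wordG u) (mkCos g H y) = mkCos g H y)
    (hm : y * wordG u * y⁻¹ ∈ H) : psi H (ch (mkCos g H y) u) = Additive.ofMul ⟨y * wordG u * y⁻¹, hm⟩ := by
  rw [psi_ch]
  apply Additive.toMul.injective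
  apply Subtype.ext
  simp only [toMul_ofMul, h]
  have h1 : sc (mkCos g H y) * y⁻¹ ∈ H := by rw [← mkCos_eq, mk_sc]
  have h2 := congrArg Subtype.val (mul_comm (⟨_, h1⟩ : H) ⟨_, hm⟩)
  simp only [Subgroup.coe_mul] at h2
  have h3 : sc (mkCos g H y) * wordG u * (sc (mkCos g H y))⁻¹ = (sc (mkCos g H y) * y⁻¹ * (y * wordG u * y⁻¹)) * (sc (mkCos g H y) * y⁻¹)⁻¹ := by group
  rw [h3, h2]; group

/-- the closed up cycle class generates -/
theorem Z1_zpowers (γ x : Gamma g) (hH : H = Subgroup.zpowers γ) (w : List (Letter g)) (hγ : γ = x * wordG w * x⁻¹) :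
    Z1 g H ≤ B1 g H ⊔ Submodule.span ℤ {ch (mkCos g H x) w} := by
  have hγm : γ ∈ H := by rw [hH]; exact Subgroup.mem_zpowers γ
  refine Z1_le _ le_sup_left (fun u hu => ?_)
  refine generation {γ} (by rw [hH]; exact (Subgroup.zpowers_eq_closure γ).symm) _ le_sup_left ?_ u hu 1 (one_mem _)
  rintro s rfl y hy
  refine ⟨wd x ++ (w ++ wInv (wd x)), by simp [wordG_wd, hγ, mul_assoc], ?_⟩
  rw [mkCos_mem hy, ch_append, ch_append, wordG_wd, rmul_mk, one_mul]
  have e : rmul g H (wordG w) (mkCos g H x) = mkCos g H x := by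
    rw [rmul_mk, mkCos_eq, ← inv_mem_iff]
    convert hγm using 1
    rw [hγ]; group
  rw [e]
  have h1 := ch_wInv_mem (mkCos g H 1) (wd x)
  rw [wordG_wd, rmul_mk, one_mul] at h1
  have : ch (mkCos g H 1) (wd x) + (ch (mkCos g H x) w + ch (mkCos g H x) (wInv (wd x))) =
    (ch (mkCos g H 1) (wd x) + ch (mkCos g H x) (wInv (wd x))) + ch (mkCos g H x) w := by abel
  rw [this]
  exact add_mem (Submodule.mem_sup_left h1) (Submodule.mem_sup_right (Submodule.mem_span_singleton_self _))

theorem conj_closed (γ x : Gamma g) (hH : γ ∈ H) (w : List (Letter g)) (hγ : γ = x * wordG w * x⁻¹) :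
    rmul g H (wordG w) (mkCos g H x) = mkCos g H x := by
  rw [rmul_mk, mkCos_eq, ← inv_mem_iff]
  convert hH using 1
  rw [hγ]; group

theorem ch_mem_Z1 (v : Cos g H) (w : List (Letter g)) (h : rmul g H (wordG w) v = v) : ch v w ∈ Z1 g H := by
  show d1 g H (ch v w) = 0
  rw [d1_ch, h, sub_self]

theorem minlen (γ x : Gamma g) (hH : H = Subgroup.zpowers γ) (w : List (Letter g)) (hγ : γ = x * wordG w * x⁻¹) (h1 : γ ≠ 1) (n : ℕ)
    (hn : ∀ y u, y * wordG u * y⁻¹ = γ → n ≤ u.length) (z : Ed g H →₀ ℤ)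
    (hz : z ∈ Z1 g H) (hzB : z ∉ B1 g H) : n ≤ nrm z := by
  have hγm : γ ∈ H := by rw [hH]; exact Subgroup.mem_zpowers γ
  haveI : IsMulCommutative H := by rw [hH]; infer_instance
  have hex : ∃ m, ∃ z, z ∈ Z1 g H ∧ z ∉ B1 g H ∧ nrm z = m := ⟨_, z, hz, hzB, rfl⟩
  obtain ⟨κ, hκ, hκB, hκm⟩ := Nat.find_spec hex
  have hmin : ∀ y, y ∈ Z1 g H → y ∉ B1 g H → nrm κ ≤ nrm y := by
    intro y hy hyB
    rw [hκm]
    exact Nat.find_min' hex ⟨y, hy, hyB, rfl⟩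
  refine le_trans ?_ (hmin z hz hzB)
  have hcl := conj_closed γ x hγm w hγ
  obtain ⟨b, ⟨N, rfl⟩, s, hs, hsum⟩ := Submodule.mem_sup.1 (Z1_zpowers γ x hH w hγ hκ)
  obtain ⟨k, rfl⟩ := Submodule.mem_span_singleton.1 hs
  have hk := min_prim κ hκ hκB hmin _ k N (by rw [← hsum, add_comm])
  have hk0 : k ≠ 0 := by
    rintro rfl
    apply hκB
    rw [← hsum]; simp only [zero_smul, add_zero]
    exact ⟨N, rfl⟩
  have hκ0 : κ ≠ 0 := by rintro rfl; exact hκB (zero_mem _)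
  obtain ⟨v, u, hu, hv, hnu⟩ := extract κ hκ hκ0
  have hpZ := ch_mem_Z1 v u hv
  have hul : 0 < u.length := List.length_pos_iff.2 hu
  have hpB : ch v u ∉ B1 g H := by
    intro hB
    have := hmin (κ - ch v u) (sub_mem hκ hpZ) (fun h => hκB (by simpa using add_mem h hB))
    omega
  have h3 := hmin _ hpZ hpB
  have h4 : nrm (ch v u) ≤ u.length := by
    have := nrm_chL_le (relWalk g H v u)
    rwa [relWalk_length] at this
  have h5 : κ = ch v u := sub_eq_zero.1 (nrm_eq_zero (by omega))
  have h6 : u.length = nrm κ := by omega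
  rw [← h6]
  obtain ⟨y, rfl⟩ := cos_ind v
  have hm : y * wordG u * y⁻¹ ∈ H := by
    rw [rmul_mk, mkCos_eq, ← inv_mem_iff] at hv
    convert hv using 1; group
  have h7 := psi_closed y u hv hm
  have hm' : x * wordG w * x⁻¹ ∈ H := by rw [← hγ]; exact hγm
  have h8 := psi_closed x w hcl hm'
  rw [← h5, ← hsum, map_add, psi_d2, zero_add, map_zsmul, h8] at h7
  have h9 := congrArg (fun a : Additive H => ((Additive.toMul a : H) : Gamma g)) h7
  simp only [toMul_zsmul, toMul_ofMul, Subgroup.coe_zpow] at h9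
  rw [← hγ] at h9
  have : k = 1 ∨ k = -1 := by omega
  rcases this with rfl | rfl
  · exact hn y u (by rw [← h9]; simp)
  · have := hn y (wInv u) (by
      rw [wordG_wInv]
      have : y * (wordG u)⁻¹ * y⁻¹ = (y * wordG u * y⁻¹)⁻¹ := by group
      rw [this, ← h9]; simp)
    simpa [wInv] using this

theorem ch_notMem_B1 (γ x : Gamma g) (hH : H = Subgroup.zpowers γ) (w : List (Letter g)) (hγ : γ = x * wordG w * x⁻¹) (h1 : γ ≠ 1) :
    ch (mkCos g H x) w ∉ B1 g H := by
  rintro ⟨N, hN⟩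
  have hγm : γ ∈ H := by rw [hH]; exact Subgroup.mem_zpowers γ
  haveI : IsMulCommutative H := by rw [hH]; infer_instance
  have hm' : x * wordG w * x⁻¹ ∈ H := by rw [← hγ]; exact hγm
  have h8 := psi_closed x w (conj_closed γ x hγm w hγ) hm'
  rw [← hN, psi_d2] at h8
  have h9 := congrArg (fun a : Additive H => ((Additive.toMul a : H) : Gamma g)) h8
  simp only [toMul_ofMul] at h9
  apply h1; rw [hγ, ← h9]; rfl

end PP6

section PP7
open Classical

variable {g : ℕ} {J H : Subgroup (Gamma g)}

theorem nrm_eq_length (L : List (Ed g J × Bool)) (h : nrm (chL L) = L.length) (d) (hd : d ∈ L) : chL L d.1 ≠ 0 := by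
  intro h0
  have hp := List.perm_cons_erase hd
  have e1 : chL L = dch d + chL (L.erase d) := by
    rw [← chL_cons]; exact (hp.map dch).sum_eq
  have e2 : L.length = (L.erase d).length + 1 := by simpa using hp.length_eq
  have h1 := nrm_chL_le (L.erase d)
  have h2 : dch d = - dch (d.1, !d.2) := by
    rcases d with ⟨e, b⟩
    cases b <;> simp [dch]
  have h3 : posD (chL (L.erase d)) (d.1, !d.2) := by
    rw [e1, Finsupp.add_apply] at h0
    rcases d with ⟨e, b⟩
    cases b <;> simp [dch, posD] at h0 ⊢ <;> omega
  have h4 := nrm_sub_dch _ _ h3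
  have e3 : chL L = chL (L.erase d) - dch (d.1, !d.2) := by rw [e1, h2]; abel
  rw [← e3] at h4
  omega

theorem nrm_cast {α : Type*} (z : α →₀ ℤ) (T : Finset α) (h : ∀ e, z e ≠ 0 → e ∈ T) : (nrm z : ℤ) = ∑ e ∈ T, |z e| := by
  rw [nrm_eq z T h]; push_cast; rfl

/-- pushforward of absolute values -/
def push (h : H ≤ J) (R : Cos g H →₀ ℤ) (v : Cos g J) : ℕ := ∑ u ∈ R.support.filter (fun u => pV h u = v), (R u).natAbs

theorem fibre_sum (h : H ≤ J) (R : Cos g H →₀ ℤ) (U : Finset (Ed g H)) (e : Ed g J) (m : Fin (2 * g) → Gamma g)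
    (hU : ∀ e', R (rmul g H (m e'.2)⁻¹ e'.1) ≠ 0 → e' ∈ U) :
    ∑ e' ∈ U.filter (fun e' => pE h e' = e), |R (rmul g H (m e'.2)⁻¹ e'.1)| = (push h R (rmul g J (m e.2)⁻¹ e.1) : ℤ) := by
  unfold push
  push_cast
  refine Finset.sum_bij_ne_zero (fun e' _ _ => rmul g H (m e'.2)⁻¹ e'.1) ?_ ?_ ?_ ?_
  · intro a ha h0
    rw [Finset.mem_filter] at ha ⊢
    refine ⟨by simpa using h0, ?_⟩
    rw [pV_rmul, ← ha.2]; rfl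
  · intro a ha h0 b hb h0' hab
    rw [Finset.mem_filter] at ha hb
    have e1 : a.2 = b.2 := by
      have h1 := congrArg Prod.snd ha.2
      have h2 := congrArg Prod.snd hb.2
      exact h1.trans h2.symm
    rw [e1] at hab
    have := (rE H (m b.2)⁻¹).injective hab
    exact Prod.ext this e1
  · intro u hu h0
    rw [Finset.mem_filter] at hu
    have e1 : rmul g H (m e.2)⁻¹ (rmul g H (m e.2) u) = u := by simp
    refine ⟨(rmul g H (m e.2) u, e.2), ?_, ?_, e1⟩
    · rw [Finset.mem_filter]
      refine ⟨hU _ ?_, ?_⟩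
      · show R (rmul g H (m e.2)⁻¹ (rmul g H (m e.2) u)) ≠ 0
        rw [e1]; simpa using hu.1
      · refine Prod.ext ?_ rfl
        show pV h (rmul g H (m e.2) u) = e.1
        rw [pV_rmul, hu.2]; simp
    · show |R (rmul g H (m e.2)⁻¹ (rmul g H (m e.2) u))| ≠ 0
      rw [e1]; simpa using hu.1
  · intro a ha h0; simp

theorem supp_in (h : H ≤ J) {sE : Finset (Ed g J)} {sF : Finset (Cos g J)} (hCl : Cl sE sF)
    (hmin : ∀ Y, Disjoint sF Y → 2 * (mm sE sF : ℤ) - sF.card ≤ 2 * (mm (sE ∪ touched Y) (sF ∪ Y) : ℤ) - (sF ∪ Y).card)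
    (c : Ed g H →₀ ℤ) (R : Cos g H →₀ ℤ) (hz : ∀ e, pE h e ∉ sE → c e = d2 g H R e)
    (hs : ∀ R', nrm c ≤ nrm (c - d2 g H R')) (e : Ed g H) (he : pE h e ∉ sE) : c e = 0 := by
  set R' := R.filter (fun v => pV h v ∉ sF) with hR'
  set κ := c - d2 g H R' with hκ
  have hκ0 : ∀ e, pE h e ∉ sE → κ e = 0 := by
    intro e he
    have h1 : pV h (fL e) ∉ sF := fun hc => he (hCl.1 _ (by rw [fL_pE]; exact hc))
    have h2 : pV h (fR e) ∉ sF := fun hc => he (hCl.2 _ (by rw [fR_pE]; exact hc))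
    rw [hκ, Finsupp.sub_apply, hz e he, d2_apply, d2_apply, hR', Finsupp.filter_apply_pos (fun v => pV h v ∉ sF) _ h1, Finsupp.filter_apply_pos (fun v => pV h v ∉ sF) _ h2]
    ring
  set Y := R'.support.image (pV h) with hY
  have hYd : Disjoint sF Y := by
    rw [Finset.disjoint_right]
    intro v hv
    obtain ⟨u, hu, rfl⟩ := Finset.mem_image.1 hv
    rw [hR', Finsupp.support_filter, Finset.mem_filter] at hu
    exact hu.2
  set N := push h R' with hN
  set T := sE ∪ touched Y with hT
  set U := (c.support ∪ κ.support) ∪ touched R'.support with hU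
  have hUc : ∀ e, c e ≠ 0 → e ∈ U := fun e he => by
    simp only [hU, Finset.mem_union, Finsupp.mem_support_iff]; exact Or.inl (Or.inl he)
  have hUκ : ∀ e, κ e ≠ 0 → e ∈ U := fun e he => by
    simp only [hU, Finset.mem_union, Finsupp.mem_support_iff]; exact Or.inl (Or.inr he)
  have hUL : ∀ e, R' (fL e) ≠ 0 → e ∈ U := fun e he => by
    simp only [hU, Finset.mem_union, mem_touched]; exact Or.inr (Or.inl (Finsupp.mem_support_iff.2 he))
  have hUR : ∀ e, R' (fR e) ≠ 0 → e ∈ U := fun e he => by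
    simp only [hU, Finset.mem_union, mem_touched]; exact Or.inr (Or.inr (Finsupp.mem_support_iff.2 he))
  have fibL : ∀ e, ∑ e' ∈ U.filter (fun e' => pE h e' = e), |R' (fL e')| = (N (fL e) : ℤ) := fun e => fibre_sum h R' U e Lm hUL
  have fibR : ∀ e, ∑ e' ∈ U.filter (fun e' => pE h e' = e), |R' (fR e')| = (N (fR e) : ℤ) := fun e => fibre_sum h R' U e Rm hUR
  have hN0 : ∀ v, v ∉ Y → N v = 0 := by
    intro v hv
    apply Finset.sum_eq_zero
    intro u hu
    rw [Finset.mem_filter] at hu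
    exact absurd (Finset.mem_image.2 ⟨u, hu.1, hu.2⟩) hv
  have main := func_ineq hCl hmin Y hYd T Finset.subset_union_left Finset.subset_union_right N hN0
  have hUsplit : ∀ f : Ed g H → ℤ, ∑ e ∈ U, f e = ∑ e ∈ U.filter (fun e => pE h e ∈ sE), f e + ∑ e ∈ U.filter (fun e => pE h e ∉ sE), f e :=
    fun f => (Finset.sum_filter_add_sum_filter_not _ _ _).symm
  have n1 : (nrm κ : ℤ) ≤ ∑ e ∈ U.filter (fun e => pE h e ∈ sE), (|c e| + (|R' (fL e)| + |R' (fR e)|)) := by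
    rw [nrm_cast κ U hUκ, hUsplit]
    have : ∑ e ∈ U.filter (fun e => pE h e ∉ sE), |κ e| = 0 := by
      apply Finset.sum_eq_zero
      intro e he
      rw [hκ0 e (Finset.mem_filter.1 he).2, abs_zero]
    rw [this, add_zero]
    apply Finset.sum_le_sum
    intro e _
    rw [hκ, Finsupp.sub_apply, d2_apply]
    have a1 := abs_sub (c e) (R' (fL e) - R' (fR e))
    have a2 := abs_sub (R' (fL e)) (R' (fR e))
    linarith
  have n2 : (nrm c : ℤ) = ∑ e ∈ U.filter (fun e => pE h e ∈ sE), |c e| + ∑ e ∈ U.filter (fun e => pE h e ∉ sE), |R' (fL e) - R' (fR e)| := by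
    rw [nrm_cast c U hUc, hUsplit]
    congr 1
    apply Finset.sum_congr rfl
    intro e he
    have := hκ0 e (Finset.mem_filter.1 he).2
    rw [hκ, Finsupp.sub_apply, d2_apply] at this
    rw [← sub_eq_zero.1 this]
  have n3 : (nrm c : ℤ) ≤ nrm κ := by exact_mod_cast hs R'
  have n4 : ∑ e ∈ U.filter (fun e => pE h e ∈ sE), (|R' (fL e)| + |R' (fR e)|) = ∑ e ∈ sE, ((N (fL e) : ℤ) + N (fR e)) := by
    rw [← Finset.sum_fiberwise_of_maps_to (g := pE h) (t := sE) (fun e he => (Finset.mem_filter.1 he).2)]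
    apply Finset.sum_congr rfl
    intro e he
    rw [← fibL, ← fibR, ← Finset.sum_add_distrib]
    apply Finset.sum_congr _ (fun _ _ => rfl)
    ext e'
    simp only [Finset.mem_filter]
    constructor
    · rintro ⟨⟨h1, h2⟩, h3⟩; exact ⟨h1, h3⟩
    · rintro ⟨h1, h3⟩; exact ⟨⟨h1, by rw [h3]; exact he⟩, h3⟩
  have n5 : ∑ e ∈ T \ sE, |(N (fL e) : ℤ) - N (fR e)| ≤ ∑ e ∈ U.filter (fun e => pE h e ∉ sE), |R' (fL e) - R' (fR e)| := by
    calc ∑ e ∈ T \ sE, |(N (fL e) : ℤ) - N (fR e)| ≤ ∑ e ∈ T \ sE, ∑ e' ∈ (U.filter (fun e => pE h e ∉ sE)).filter (fun e' => pE h e' = e), |R' (fL e') - R' (fR e')| := by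
          apply Finset.sum_le_sum
          intro e he
          have e1 : (U.filter (fun e => pE h e ∉ sE)).filter (fun e' => pE h e' = e) = U.filter (fun e' => pE h e' = e) := by
            ext e'
            simp only [Finset.mem_filter]
            constructor
            · rintro ⟨⟨h1, h2⟩, h3⟩; exact ⟨h1, h3⟩
            · rintro ⟨h1, h3⟩; exact ⟨⟨h1, by rw [h3]; exact (Finset.mem_sdiff.1 he).2⟩, h3⟩
          rw [e1, ← fibL, ← fibR, ← Finset.sum_sub_distrib]
          refine (Finset.abs_sum_le_sum_abs _ _).trans (Finset.sum_le_sum (fun e' _ => abs_abs_sub_abs_le _ _))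
      _ ≤ _ := by
          rw [Finset.sum_fiberwise_eq_sum_filter]
          apply Finset.sum_le_sum_of_subset_of_nonneg (Finset.filter_subset _ _)
          intros; positivity
  rw [Finset.sum_add_distrib, n4] at n1
  have n6 : ∑ v ∈ Y, (N v : ℤ) ≤ 0 := by linarith
  have hR0 : R' = 0 := by
    ext u
    by_contra hu
    have hu' : u ∈ R'.support := Finsupp.mem_support_iff.2 hu
    have h1 : (N (pV h u) : ℤ) ≤ ∑ v ∈ Y, (N v : ℤ) :=
      Finset.single_le_sum (f := fun v => (N v : ℤ)) (fun _ _ => by positivity) (Finset.mem_image_of_mem _ hu')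
    have h2 : (R' u).natAbs ≤ N (pV h u) :=
      Finset.single_le_sum (f := fun u => (R' u).natAbs) (fun _ _ => by positivity) (Finset.mem_filter.2 ⟨hu', rfl⟩)
    simp only [Finsupp.coe_zero, Pi.zero_apply] at hu
    omega
  have := hκ0 e he
  rw [hκ, hR0] at this
  simpa using this

end PP7

section PP8
open Classical

variable {g : ℕ} {J H : Subgroup (Gamma g)}

/-- reversed list of darts -/
def rv (L : List (Ed g J × Bool)) : List (Ed g J × Bool) := (L.map (fun d => (d.1, !d.2))).reverse

theorem revW_relWalk (v : Cos g J) (t : List (Letter g)) :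
    rv (relWalk g J v t) = relWalk g J (rmul g J (wordG t) v) (wInv t) := by
  induction t generalizing v with
  | nil => rfl
  | cons l t ih =>
    have e1 : wInv (l :: t) = wInv t ++ [lInv l] := by simp [wInv]
    have e2 : rv (relWalk g J v [l] ++ relWalk g J (rmul g J (letterG l) v) t) =
      rv (relWalk g J (rmul g J (letterG l) v) t) ++ rv (relWalk g J v [l]) := by
      simp [rv]
    have e3 : rv (relWalk g J v [l]) = relWalk g J (rmul g J (letterG l) v) [lInv l] := by
      rcases l with ⟨l, b⟩
      cases b
      · simp [relWalk, rv, lInv, letterG]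
      · simp [relWalk, rv, lInv, letterG]
    rw [relWalk_cons v l t, e2, e3, ih, e1, relWalk_append]
    simp

theorem shortest_words (x : Gamma g) (w : List (Letter g)) (hm : x * wordG w * x⁻¹ ∈ J)
    (hsr : (cover g J).ShortestRep Set.univ Set.univ (relWalk g J (mkCos g J x) w))
    (y : Gamma g) (u : List (Letter g)) (h : y * wordG u * y⁻¹ = x * wordG w * x⁻¹) : w.length ≤ u.length := by
  have hx := conj_closed _ x hm w rfl
  have hy := conj_closed _ y (h ▸ hm) u rfl
  have hx' := walk_relWalk (mkCos g J x) w
  have hy' := walk_relWalk (mkCos g J y) u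
  rw [hx] at hx'
  rw [hy] at hy'
  set t := wd (x⁻¹ * y) with ht
  have htw : wordG t = x⁻¹ * y := wordG_wd _
  have hq := walk_relWalk (mkCos g J x) t
  have e1 : rmul g J (wordG t) (mkCos g J x) = mkCos g J y := by rw [htw, rmul_mk]; congr 1; group
  rw [e1] at hq
  have key : relWalk g J (mkCos g J x) (t ++ u ++ wInv t) = relWalk g J (mkCos g J x) t ++ relWalk g J (mkCos g J y) u ++ rv (relWalk g J (mkCos g J x) t) := by
    rw [relWalk_append, relWalk_append, e1, revW_relWalk, e1]
    congr 2
    rw [wordG_append, ← rmul_rmul, e1, hy]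
  have hw : wordG w = wordG (t ++ u ++ wInv t) := by
    rw [wordG_append, wordG_append, wordG_wInv, htw]
    have : x⁻¹ * y * wordG u * (x⁻¹ * y)⁻¹ = x⁻¹ * (y * wordG u * y⁻¹) * x := by group
    rw [this, h]; group
  have hom := relWalk_hom hw (mkCos g J x)
  rw [hx, key] at hom
  have := hsr (relWalk g J (mkCos g J y) u) ⟨mkCos g J x, mkCos g J y, relWalk g J (mkCos g J x) t, hx', hy', hq,
    fun _ _ => trivial, fun _ _ => trivial, fun _ _ => trivial, hom⟩
  exact (relWalk_length (mkCos g J x) w).symm.le.trans (le_trans this (relWalk_length (mkCos g J y) u).le)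

theorem core_edges (S : Set (Gamma g)) (hS : Subgroup.closure S = J) {sE : Finset (Ed g J)} {sF : Finset (Cos g J)}
    (hE : E0 J S ⊆ (sE : Set (Ed g J))) (hCl : Cl sE sF)
    (hmin : ∀ Y, Disjoint sF Y → 2 * (mm sE sF : ℤ) - sF.card ≤ 2 * (mm (sE ∪ touched Y) (sF ∪ Y) : ℤ) - (sF ∪ Y).card) :
    coreE1 g J ⊆ (sE : Set (Ed g J)) := by
  rintro e ⟨c, ⟨⟨hne, v, hv⟩, ⟨-, -, hnn⟩, hsr⟩, b, hb⟩
  obtain ⟨x, rfl⟩ := cos_ind v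
  obtain ⟨hc, hcl⟩ := walk_eq _ _ hv
  set w := (cover g J).wordOf c with hw
  clear_value w
  subst hc
  have hm : x * wordG w * x⁻¹ ∈ J := by
    have h1 : mkCos g J x = rmul g J (wordG w) (mkCos g J x) := hcl
    rw [rmul_mk, mkCos_eq] at h1
    exact h1
  set γ := x * wordG w * x⁻¹ with hγ
  have hγ1 : γ ≠ 1 := by
    intro h1
    have hw1 : wordG w = wordG [] := by
      rw [wordG_nil]
      have : wordG w = x⁻¹ * γ * x := by rw [hγ]; group
      rw [this, h1]; group
    have hom := relWalk_hom hw1 (mkCos g J x)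
    have h2 : mkCos g J x = rmul g J (wordG w) (mkCos g J x) := hcl
    rw [← h2] at hom
    exact hnn ⟨mkCos g J x, hv, hom⟩
  have hshort := shortest_words x w hm hsr
  obtain ⟨H, hH⟩ : ∃ H, H = Subgroup.zpowers γ := ⟨_, rfl⟩
  have hHJ : H ≤ J := by rw [hH]; exact Subgroup.zpowers_le.2 hm
  have hγH : γ ∈ H := by rw [hH]; exact Subgroup.mem_zpowers γ
  have hclH := conj_closed γ x hγH w hγ
  set z := ch (mkCos g H x) w with hz
  have hzZ : z ∈ Z1 g H := ch_mem_Z1 _ _ hclH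
  have hzB : z ∉ B1 g H := ch_notMem_B1 γ x hH w hγ hγ1
  have hml := minlen γ x hH w hγ hγ1 w.length hshort
  have hle : nrm z ≤ w.length := by
    have := nrm_chL_le (relWalk g H (mkCos g H x) w)
    rwa [relWalk_length] at this
  have heq : nrm z = w.length := le_antisymm hle (hml z hzZ hzB)
  -- decomposition
  have hdec : z ∈ B1 g H ⊔ Finsupp.supported ℤ ℤ (pE hHJ ⁻¹' E0 J S) := by
    have h1 := ch_supp_E0 hHJ S hS (wd x ++ (w ++ wInv (wd x))) (by
      have : wordG (wd x ++ (w ++ wInv (wd x))) = γ := by simp [wordG_wd, hγ, mul_assoc]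
      rw [this]; exact hm)
    rw [ch_append, ch_append, wordG_wd, rmul_mk, one_mul, hclH] at h1
    have h2 := ch_wInv_mem (mkCos g H 1) (wd x)
    rw [wordG_wd, rmul_mk, one_mul] at h2
    have h3 := sub_mem h1 (Submodule.mem_sup_left (T := Finsupp.supported ℤ ℤ (pE hHJ ⁻¹' E0 J S)) h2)
    convert h3 using 1
    rw [hz]; abel
  obtain ⟨_, ⟨R, rfl⟩, s, hs, hsum⟩ := Submodule.mem_sup.1 hdec
  have hsupp : ∀ e, pE hHJ e ∉ sE → z e = 0 := by
    refine supp_in hHJ hCl hmin z R ?_ ?_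
    · intro e he
      have : s e = 0 := by
        by_contra h0
        exact he (hE ((Finsupp.mem_supported _ _).1 hs (Finsupp.mem_support_iff.2 h0)))
      rw [← hsum, Finsupp.add_apply, this, add_zero]
    · intro R'
      rw [heq]
      have hB : d2 g H R' ∈ B1 g H := ⟨R', rfl⟩
      exact hml _ (sub_mem hzZ (B1_le_Z1 hB)) (fun h => hzB (by simpa using add_mem h hB))
  have hb' : (e, b) ∈ relWalk g J (mkCos g J x) w := hb
  rw [← pV_mk hHJ, ← relWalk_proj] at hb'
  obtain ⟨d, hd, hde⟩ := List.mem_map.1 hb'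
  have h1 := nrm_eq_length (relWalk g H (mkCos g H x) w) (by rw [relWalk_length]; exact heq) d hd
  have h2 : pE hHJ d.1 = e := congrArg Prod.fst hde
  by_contra h3
  exact h1 (hsupp d.1 (by rw [h2]; exact h3))

end PP8

section PP9
open Classical

variable {g : ℕ} {J : Subgroup (Gamma g)}

theorem letter_mem_relator (l : Fin (2 * g)) : (l, true) ∈ relatorWord g := by
  have hl := l.2
  refine List.mem_map.2 ⟨⟨4 * ((l : ℕ) / 2) + (l : ℕ) % 2, by omega⟩, List.mem_finRange _, ?_⟩
  refine Prod.ext (Fin.ext ?_) ?_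
  · simp only [relLabel]; omega
  · simp only [relSign]; rw [decide_eq_true_iff]; omega

theorem tail_first (v : Cos g J) (l : Letter g) (q : List (Letter g)) : ∃ d ∈ relWalk g J v (l :: q), dt d = v := by
  rcases l with ⟨l, b⟩
  cases b
  · exact ⟨_, List.mem_cons_self, by simp [dt, edst]⟩
  · exact ⟨_, List.mem_cons_self, by simp [dt]⟩

theorem tail_prefix (hg : 2 ≤ g) (v : Cos g J) (p q : List (Letter g)) (h : relatorWord g = p ++ q) :
    ∃ d ∈ relWalk g J v (relatorWord g), dt d = rmul g J (wordG p) v := by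
  have hne : ∃ l q', relatorWord g = l :: q' := by
    have := letter_mem_relator (g := g) ⟨0, by omega⟩
    cases h' : relatorWord g with
    | nil => rw [h'] at this; simp at this
    | cons l q' => exact ⟨l, q', rfl⟩
  cases q with
  | nil =>
    obtain ⟨l, q', h1⟩ := hne
    have h2 : wordG p = 1 := by
      rw [← wordG_relator, h, List.append_nil]
    rw [h2, rmul_one, h1]
    exact tail_first v l q'
  | cons l q =>
    obtain ⟨d, hd, hd'⟩ := tail_first (rmul g J (wordG p) v) l q
    refine ⟨d, ?_, hd'⟩
    rw [h, relWalk_append]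
    exact List.mem_append_right _ hd

theorem tail_inits (w : List (Letter g)) (v : Cos g J) (d) (hd : d ∈ relWalk g J v w) : ∃ p ∈ w.inits, dt d = rmul g J (wordG p) v := by
  induction w generalizing v with
  | nil => simp [relWalk] at hd
  | cons l w ih =>
    rw [relWalk_cons, List.mem_append] at hd
    rcases hd with hd | hd
    · refine ⟨[], by simp, ?_⟩
      rw [wordG_nil, rmul_one]
      rcases l with ⟨l, b⟩
      cases b
      · simp only [relWalk, List.mem_singleton] at hd
        subst hd; simp [dt, edst]
      · simp only [relWalk, List.mem_singleton] at hd
        subst hd; simp [dt]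
    · obtain ⟨p, hp, he⟩ := ih _ hd
      refine ⟨l :: p, ?_, ?_⟩
      · simpa using hp
      · rw [he]; simp

/-- faces touching the given vertex set -/
theorem touch_finite (W : Set (Cos g J)) (hW : W.Finite) : {f : Cos g J | ∃ d ∈ relWalk g J f (relatorWord g), dt d ∈ W}.Finite := by
  have : {f : Cos g J | ∃ d ∈ relWalk g J f (relatorWord g), dt d ∈ W} ⊆
      ⋃ v ∈ W, {f | f ∈ ((relatorWord g).inits.map (fun p => rmul g J (wordG p)⁻¹ v))} := by
    rintro f ⟨d, hd, hdW⟩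
    obtain ⟨p, hp, he⟩ := tail_inits _ _ _ hd
    simp only [Set.mem_iUnion]
    refine ⟨dt d, hdW, List.mem_map.2 ⟨p, hp, ?_⟩⟩
    rw [he]; simp
  exact (hW.biUnion (fun v _ => List.finite_toSet _)).subset this

/-- same component -/
abbrev rch (a b : (cover g J).Cell) : Prop := (cover g J).reachS (coreS1 g J) a b

theorem rch_symm {a b : (cover g J).Cell} (h : rch a b) : rch b a := by
  have h' : Relation.ReflTransGen (fun a b => (cover g J).incid a b ∧ ¬ (cover g J).inSub (coreS1 g J) a ∧
    ¬ (cover g J).inSub (coreS1 g J) b) a b := h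
  induction h' with
  | refl => exact Relation.ReflTransGen.refl
  | tail h1 h2 ih => exact Relation.ReflTransGen.head ⟨h2.1.symm, h2.2.2, h2.2.1⟩ (ih h1)

theorem fcell_out (f : Cos g J) : ¬ (cover g J).inSub (coreS1 g J) ((cover g J).fCell f) := fun h => h

theorem coreFin_of_rch {a b : (cover g J).Cell} (h : rch a b) (ha : coreFin g J a)
    (hb : ¬ (cover g J).inSub (coreS1 g J) b) : coreFin g J b := by
  refine ⟨hb, ha.2.subset ?_⟩
  intro f hf
  exact h.trans hf

theorem rch_vf {v f : Cos g J} (hv : v ∉ coreV1 g J) (h : ∃ d ∈ relWalk g J f (relatorWord g), dt d = v) :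
    rch ((cover g J).vCell v) ((cover g J).fCell f) :=
  Relation.ReflTransGen.single ⟨Or.inl h, hv, fcell_out f⟩

theorem rch_ef {e : Ed g J} {f : Cos g J} (he : e ∉ coreE1 g J) (h : ∃ b, (e, b) ∈ relWalk g J f (relatorWord g)) :
    rch ((cover g J).eCell e) ((cover g J).fCell f) :=
  Relation.ReflTransGen.single ⟨Or.inl h, he, fcell_out f⟩

theorem edge_face (e : Ed g J) : ∃ f : Cos g J, (e, true) ∈ relWalk g J f (relatorWord g) := by
  obtain ⟨p, q, h⟩ := List.append_of_mem (letter_mem_relator e.2)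
  refine ⟨rmul g J (wordG p)⁻¹ e.1, ?_⟩
  rw [h, relWalk_append]
  apply List.mem_append_right
  simp [relWalk]

theorem rmul_closed (Q : Cos g J → Prop) (v : Cos g J) (hv : Q v)
    (h1 : ∀ u l, Q u → Q (rmul g J (PresentedGroup.of l) u)) (h2 : ∀ u l, Q u → Q (rmul g J (PresentedGroup.of l)⁻¹ u))
    (u : Cos g J) : Q u := by
  have key : ∀ (w : List (Letter g)) (v : Cos g J), Q v → Q (rmul g J (wordG w) v) := by
    intro w
    induction w with
    | nil => intro v hv; simpa using hv
    | cons l w ih =>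
      intro v hv
      rw [wordG_cons, ← rmul_rmul]
      apply ih
      rcases l with ⟨l, b⟩
      cases b
      · exact h2 _ _ hv
      · exact h1 _ _ hv
  obtain ⟨x, rfl⟩ := cos_ind v
  obtain ⟨y, rfl⟩ := cos_ind u
  have := key (wd (x⁻¹ * y)) _ hv
  rw [wordG_wd, rmul_mk] at this
  simpa using this

theorem meets (hg : 2 ≤ g) [Infinite (Cos g J)] (f : Cos g J) (hf : coreFin g J ((cover g J).fCell f)) :
    ∃ f' : Cos g J, rch ((cover g J).fCell f) ((cover g J).fCell f') ∧ ∃ d ∈ relWalk g J f' (relatorWord g), dt d ∈ coreV1 g J := by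
  by_contra hc
  push Not at hc
  set Q : Cos g J → Prop := fun f' => rch ((cover g J).fCell f) ((cover g J).fCell f') with hQ
  have step1 : ∀ v p q, relatorWord g = p ++ q → Q v → Q (rmul g J (wordG p) v) := by
    intro v p q h hv
    obtain ⟨d, hd, hd'⟩ := tail_prefix hg v p q h
    have h1 : rmul g J (wordG p) v ∉ coreV1 g J := hd' ▸ hc v hv d hd
    have h2 := tail_prefix hg (rmul g J (wordG p) v) [] (relatorWord g) rfl
    rw [wordG_nil, rmul_one] at h2
    exact (Relation.ReflTransGen.trans hv (rch_symm (rch_vf h1 ⟨d, hd, hd'⟩))).trans (rch_vf h1 h2)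
  have step2 : ∀ v p q, relatorWord g = p ++ q → Q v → Q (rmul g J (wordG p)⁻¹ v) := by
    intro v p q h hv
    obtain ⟨d, hd, hd'⟩ := tail_prefix hg v [] (relatorWord g) rfl
    rw [wordG_nil, rmul_one] at hd'
    have h1 : v ∉ coreV1 g J := hd' ▸ hc v hv d hd
    have h2 := tail_prefix hg (rmul g J (wordG p)⁻¹ v) p q h
    rw [rmul_rmul, inv_mul_cancel, rmul_one] at h2
    exact (Relation.ReflTransGen.trans hv (rch_symm (rch_vf h1 ⟨d, hd, hd'⟩))).trans (rch_vf h1 h2)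
  have all : ∀ u, Q u := by
    refine rmul_closed Q f Relation.ReflTransGen.refl ?_ ?_
    · intro u l hu
      obtain ⟨p, q, h⟩ := List.append_of_mem (letter_mem_relator l)
      have h1 := step1 _ (p ++ [(l, true)]) q (by simp [h]) (step2 u p _ h hu)
      simpa [letterG] using h1
    · intro u l hu
      obtain ⟨p, q, h⟩ := List.append_of_mem (letter_mem_relator l)
      have h1 := step1 _ p _ h (step2 u (p ++ [(l, true)]) q (by simp [h]) hu)
      simpa [letterG] using h1
  have h3 : (Set.univ : Set (Cos g J)).Finite := hf.2.subset (fun u _ => all u)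
  exact Set.infinite_univ h3

theorem fin_faces (hg : 2 ≤ g) [Infinite (Cos g J)] (hV : (coreV1 g J).Finite) :
    {f : Cos g J | coreFin g J ((cover g J).fCell f)}.Finite := by
  have hT := touch_finite (coreV1 g J) hV
  have : {f : Cos g J | coreFin g J ((cover g J).fCell f)} ⊆
      ⋃ f' ∈ ({f' : Cos g J | ∃ d ∈ relWalk g J f' (relatorWord g), dt d ∈ coreV1 g J} ∩ {f' | coreFin g J ((cover g J).fCell f')}),
        {f : Cos g J | rch ((cover g J).fCell f') ((cover g J).fCell f)} := by
    intro f hf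
    obtain ⟨f', h1, h2⟩ := meets hg f hf
    simp only [Set.mem_iUnion]
    exact ⟨f', ⟨h2, coreFin_of_rch h1 hf (fcell_out f')⟩, rch_symm h1⟩
  exact ((hT.inter_of_left _).biUnion (fun f' hf' => hf'.2.2)).subset this

theorem fin_edges (hF : {f : Cos g J | coreFin g J ((cover g J).fCell f)}.Finite) :
    {e : Ed g J | coreFin g J ((cover g J).eCell e)}.Finite := by
  have : {e : Ed g J | coreFin g J ((cover g J).eCell e)} ⊆
      ⋃ f ∈ {f : Cos g J | coreFin g J ((cover g J).fCell f)}, {e | e ∈ (relWalk g J f (relatorWord g)).map Prod.fst} := by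
    intro e he
    obtain ⟨f, hf⟩ := edge_face e
    simp only [Set.mem_iUnion]
    exact ⟨f, coreFin_of_rch (rch_ef he.1 ⟨true, hf⟩) he (fcell_out f), List.mem_map.2 ⟨_, hf, rfl⟩⟩
  exact (hF.biUnion (fun f _ => List.finite_toSet _)).subset this

theorem fin_verts (hg : 2 ≤ g) (hF : {f : Cos g J | coreFin g J ((cover g J).fCell f)}.Finite) :
    {v : Cos g J | coreFin g J ((cover g J).vCell v)}.Finite := by
  refine hF.subset ?_
  intro v hv
  have h2 := tail_prefix hg v [] (relatorWord g) rfl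
  rw [wordG_nil, rmul_one] at h2
  exact coreFin_of_rch (rch_vf hv.1 h2) hv (fcell_out v)

theorem coreE1_finite (hg : 2 ≤ g) [Infinite (Cos g J)] (hfg : J.FG) : (coreE1 g J).Finite := by
  obtain ⟨S, hS⟩ := hfg
  have hf := E0_finite (J := J) (S : Set (Gamma g)) S.finite_toSet
  obtain ⟨sE, sF, h1, h2, h3⟩ := exists_K (J := J) hg hf.toFinset (by
    rw [Set.Finite.coe_toFinset]; exact Z1_E0 _ hS)
  refine Set.Finite.subset sE.finite_toSet (core_edges _ hS ?_ h2 h3)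
  intro e he
  exact h1 (hf.mem_toFinset.2 he)

theorem coreV1_finite (hE : (coreE1 g J).Finite) : (coreV1 g J).Finite := by
  have : coreV1 g J ⊆ (cover g J).src '' coreE1 g J ∪ (cover g J).dst '' coreE1 g J := by
    rintro v ⟨e, he, h | h⟩
    · exact Or.inl ⟨e, he, h⟩
    · exact Or.inr ⟨e, he, h⟩
  exact ((hE.image _).union (hE.image _)).subset this

theorem core_main (g : ℕ) (hg : 2 ≤ g) (J : Subgroup (Gamma g)) (hfg : J.FG) : (coreSub g J).Compact := by
  unfold coreSub
  split_ifs with hJ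
  · exact ⟨Set.finite_singleton _, Set.finite_empty, Set.finite_empty⟩
  · rcases finite_or_infinite (Cos g J) with hfin | hinf
    · have hE : Finite (Ed g J) := inferInstance
      exact ⟨Set.toFinite (α := Cos g J) _, Set.toFinite (α := Ed g J) _, Set.toFinite (α := Cos g J) _⟩
    · have hE := coreE1_finite hg hfg
      have hV := coreV1_finite hE
      have hF := fin_faces hg hV
      exact ⟨hV.union (fin_verts hg hF), hE.union (fin_edges hF), hF⟩

end PP9

/-- If `J ≤ Γ_g` is finitely generated, then the core surface
`Core(J)` is compact. -/
theorem statement_18 (g : ℕ) (hg : 2 ≤ g) (J : Subgroup (Gamma g)) (hfg : J.FG) :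
    (coreSub g J).Compact := by
  exact core_main g hg J hfg

end CS

end
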